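/- arXiv:2507.18335 — 9 statements merged into one kernel-verified Lean document; each statement's English description precedes it below -/
import Mathlib

section
/- Let K = ℂ((t)) be the field of formal Laurent series over ℂ, and for a positive integer e let A_e denote the K-algebra K[x]/(x^e − t). Then for all positive integers e and f there is an isomorphism of K-algebras A_e ⊗_K A_f ≅ (A_{lcm(e,f)})^{gcd(e,f)}, i.e., the tensor product is isomorphic to the product of gcd(e,f) copies of A_{lcm(e,f)}. -/
/-!
Write `d = gcd e f`, `e = d e'`, `f = d f'`, `m = lcm e f = e f' = f e'`, and let `x`, `z`, `y` be
the canonical generators of `A e`, `A f`, `A m`. For a primitive `f`-th root of unity `ζ` in the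
base field `K`, the algebra map `A e ⊗ A f → (A m)^d` whose `i`-th component sends `x ↦ y ^ f'` and
`z ↦ ζ ^ i y ^ e'` is an isomorphism. Both sides have dimension `e f = d m`, so it is enough to
prove surjectivity:

* The element `x ^ (e - e') z ^ f'` maps to the tuple of the pairwise distinct *scalars*
  `(ζ ^ f') ^ i t`, so Lagrange interpolation puts every coordinate idempotent in the range.
* As `e'` and `f'` are coprime, some monomial `x ^ a z ^ b` has `i`-th coordinate a nonzero scalar
  times `y`; together with the idempotents this yields all tuples supported at `i`.

The irreducibility of `X ^ n - t` plays no role: the argument works over any field with `t ≠ 0` and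
a primitive `f`-th root of unity.
-/

open scoped TensorProduct

/-- The canonical variable `t` of the Laurent series field `ℂ((t))`. -/
noncomputable def tvar : LaurentSeries ℂ := HahnSeries.single 1 1

/-- `A e = K[x]/(x^e - t)` where `K = ℂ((t))`. -/
noncomputable abbrev A (e : ℕ) : Type :=
  AdjoinRoot ((Polynomial.X ^ e - Polynomial.C tvar : Polynomial (LaurentSeries ℂ)))

theorem aeval_mem_subalgebra {K B : Type*} [Field K] [CommRing B] [Algebra K B]
    (S : Subalgebra K B) (p : Polynomial K) {s : B} (hs : s ∈ S) : Polynomial.aeval s p ∈ S := by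
  rw [Polynomial.aeval_eq_sum_range]
  exact S.sum_mem fun i _ => S.smul_mem (S.pow_mem hs i) _

/-- A subalgebra of a power `B^d` is everything if it contains a tuple of pairwise distinct scalars
and, for each index `i`, an element whose `i`-th coordinate generates `B`. -/
theorem subalgebra_pi_eq_top {K B : Type*} [Field K] [CommRing B] [Algebra K B] {d : ℕ}
    (S : Subalgebra K (Fin d → B)) (v : Fin d → K) (hv : Function.Injective v)
    (hS : (fun i => algebraMap K B (v i)) ∈ S) (y : B)
    (hy : ∀ b : B, ∃ p : Polynomial K, Polynomial.aeval y p = b)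
    (hyS : ∀ i, ∃ s ∈ S, s i = y) : S = ⊤ := by
  have aeval_apply : ∀ (p : Polynomial K) (s : Fin d → B) (j : Fin d),
      Polynomial.aeval s p j = Polynomial.aeval (s j) p := fun p s j =>
    (Polynomial.aeval_algHom_apply (Pi.evalAlgHom K (fun _ : Fin d => B) j) s p).symm
  have idem : ∀ i, (Pi.single i 1 : Fin d → B) ∈ S := by
    intro i
    have h := aeval_mem_subalgebra S (Lagrange.basis Finset.univ v i) hS
    convert h using 1
    funext j
    rw [aeval_apply, Polynomial.aeval_algebraMap_apply, Polynomial.coe_aeval_eq_eval]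
    by_cases hij : i = j
    · subst hij
      rw [Lagrange.eval_basis_self hv.injOn (Finset.mem_univ _)]
      simp
    · rw [Lagrange.eval_basis_of_ne hij (Finset.mem_univ _)]
      simp [Ne.symm hij]
  have single_mem : ∀ i (b : B), (Pi.single i b : Fin d → B) ∈ S := by
    intro i b
    obtain ⟨p, rfl⟩ := hy b
    obtain ⟨s, hs, hsi⟩ := hyS i
    have h := S.mul_mem (aeval_mem_subalgebra S p hs) (idem i)
    convert h using 1
    funext j
    rw [Pi.mul_apply, aeval_apply]
    by_cases hij : j = i
    · subst hij
      simp [hsi]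
    · simp [hij]
  rw [eq_top_iff]
  intro g _
  rw [← Finset.univ_sum_single g]
  exact S.sum_mem fun i _ => single_mem i (g i)

/-- Bezout's identity for coprime `e'`, `f'` with nonnegative coefficients, at the cost of a
multiple of `e' * f`. -/
theorem exists_bezout (e' f' f : ℕ) (he : 0 < e') (hf' : 0 < f') (hf : 0 < f)
    (h : Nat.Coprime f' e') : ∃ a b k : ℕ, f' * a + e' * b = 1 + e' * f * k := by
  obtain ⟨a, q, haq⟩ : ∃ a q : ℕ, f' * a = 1 + e' * q := by
    rcases Nat.lt_or_ge 1 e' with h1 | h1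
    · obtain ⟨a, -, ha⟩ := Nat.exists_mul_mod_eq_one_of_coprime h h1
      exact ⟨a, f' * a / e', by have := Nat.mod_add_div (f' * a) e'; omega⟩
    · obtain rfl : e' = 1 := by omega
      exact ⟨1, f' - 1, by omega⟩
  obtain ⟨g, rfl⟩ : ∃ g, f = g + 1 := ⟨f - 1, by omega⟩
  exact ⟨a, q * g, q, by rw [haq]; ring⟩

theorem finrank_adjoinRoot_X_pow_sub_C {K : Type*} [Field K] (t : K) {n : ℕ} (hn : 0 < n) :
    Module.finrank K (AdjoinRoot (Polynomial.X ^ n - Polynomial.C t : Polynomial K)) = n := by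
  rw [(AdjoinRoot.powerBasis (Polynomial.X_pow_sub_C_ne_zero hn t)).finrank,
    AdjoinRoot.powerBasis_dim, Polynomial.natDegree_X_pow_sub_C]

theorem finite_adjoinRoot_X_pow_sub_C {K : Type*} [Field K] (t : K) {n : ℕ} (hn : 0 < n) :
    Module.Finite K (AdjoinRoot (Polynomial.X ^ n - Polynomial.C t : Polynomial K)) :=
  (AdjoinRoot.powerBasis (Polynomial.X_pow_sub_C_ne_zero hn t)).finite

theorem root_pow_eq {K : Type*} [Field K] (t : K) (n : ℕ) :
    (AdjoinRoot.root (Polynomial.X ^ n - Polynomial.C t : Polynomial K)) ^ n =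
      algebraMap K _ t := by
  have h := AdjoinRoot.aeval_eq (f := (Polynomial.X ^ n - Polynomial.C t : Polynomial K))
    (Polynomial.X ^ n - Polynomial.C t)
  rw [AdjoinRoot.mk_self] at h
  simpa [sub_eq_zero] using h

/-- Every coordinate of the image of the second generator satisfies its equation `X ^ f = t`. -/
theorem twist_pow {K B : Type*} [Field K] [CommRing B] [Algebra K B] (t : K) (d e' f' : ℕ)
    (ζ : K) (hζ : ζ ^ (d * f') = 1) (y : B) (hym : y ^ (d * e' * f') = algebraMap K B t) (i : ℕ) :
    (algebraMap K B (ζ ^ i) * y ^ e') ^ (d * f') = algebraMap K B t := by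
  rw [mul_pow, ← map_pow, ← pow_mul, mul_comm i, pow_mul, hζ, one_pow, map_one, one_mul, ← hym]
  ring

/-- Surjectivity of the map of the decomposition, for any algebra `B` generated by a root `y` of
`X ^ m - t`: the images of the two generators generate `B^d`. -/
theorem eq_top_of_mem {K B : Type*} [Field K] [CommRing B] [Algebra K B] (t : K) (ht : t ≠ 0)
    (d e' f' : ℕ) (hd : 0 < d) (he : 0 < e') (hf : 0 < f') (hcop : Nat.Coprime f' e') (ζ : K)
    (hζ : IsPrimitiveRoot ζ (d * f')) (y : B) (hym : y ^ (d * e' * f') = algebraMap K B t)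
    (hy : ∀ b : B, ∃ p : Polynomial K, Polynomial.aeval y p = b)
    (S : Subalgebra K (Fin d → B)) (hX : (fun _ => y ^ f') ∈ S)
    (hZ : (fun i : Fin d => algebraMap K B (ζ ^ (i : ℕ)) * y ^ e') ∈ S) : S = ⊤ := by
  have hdf : 0 < d * f' := Nat.mul_pos hd hf
  have hζ0 : ζ ≠ 0 := hζ.ne_zero hdf.ne'
  have hω : IsPrimitiveRoot (ζ ^ f') d := hζ.pow hdf (mul_comm d f')
  set X : Fin d → B := fun _ => y ^ f'
  set Z : Fin d → B := fun i => algebraMap K B (ζ ^ (i : ℕ)) * y ^ e'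
  refine subalgebra_pi_eq_top S (fun i => (ζ ^ f') ^ (i : ℕ) * t) ?_ ?_ y ?_ ?_
  · intro i j hij
    exact Fin.ext (hω.pow_inj i.2 j.2 (mul_right_cancel₀ ht hij))
  · convert S.mul_mem (S.pow_mem hX (d * e' - e')) (S.pow_mem hZ f') using 1
    funext i
    have hexp : f' * (d * e' - e') + e' * f' = d * e' * f' := by
      have : e' ≤ d * e' := Nat.le_mul_of_pos_left _ hd
      rw [mul_comm e' f', ← mul_add, Nat.sub_add_cancel this, mul_comm]
    simp only [X, Z, Pi.mul_apply, Pi.pow_apply]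
    rw [map_mul, ← hym, ← hexp, pow_add, pow_mul y f', pow_mul y e', mul_pow, ← map_pow,
      pow_right_comm ζ f']
    ring
  · exact hy
  · intro i
    obtain ⟨a, b, k, habk⟩ := exists_bezout e' f' (d * f') he hf hdf hcop
    -- `X ^ a * Z ^ b` has `i`-th coordinate `c * y` for this nonzero scalar `c`.
    have hc : (ζ ^ (i : ℕ)) ^ b * t ^ k ≠ 0 := by positivity
    refine ⟨((ζ ^ (i : ℕ)) ^ b * t ^ k)⁻¹ • (X ^ a * Z ^ b), S.smul_mem
      (S.mul_mem (S.pow_mem hX a) (S.pow_mem hZ b)) _, ?_⟩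
    have h : (X ^ a * Z ^ b) i = ((ζ ^ (i : ℕ)) ^ b * t ^ k) • y := by
      have h1 : y ^ (f' * a) * y ^ (e' * b) = algebraMap K B (t ^ k) * y := by
        rw [← pow_add, habk, map_pow, ← hym]
        ring
      simp only [X, Z, Pi.mul_apply, Pi.pow_apply]
      rw [Algebra.smul_def, map_mul, mul_assoc, ← h1, mul_pow, ← map_pow]
      ring
    rw [Pi.smul_apply, h, inv_smul_smul₀ hc]

/-- The decomposition over an arbitrary field with a primitive `f`-th root of unity, with the
factorisations `e = d e'` and `f = d f'` explicit and `lcm e f` written as `d e' f'`. -/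
theorem tensor_equiv_pi {K : Type*} [Field K] (t : K) (ht : t ≠ 0) (d e' f' : ℕ) (hd : 0 < d)
    (he : 0 < e') (hf : 0 < f') (hcop : Nat.Coprime f' e') (ζ : K)
    (hζ : IsPrimitiveRoot ζ (d * f')) :
    Nonempty ((AdjoinRoot (Polynomial.X ^ (d * e') - Polynomial.C t : Polynomial K)) ⊗[K]
      (AdjoinRoot (Polynomial.X ^ (d * f') - Polynomial.C t : Polynomial K)) ≃ₐ[K]
      (Fin d → AdjoinRoot (Polynomial.X ^ (d * e' * f') - Polynomial.C t : Polynomial K))) := by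
  have hdf : 0 < d * f' := Nat.mul_pos hd hf
  have hde : 0 < d * e' := Nat.mul_pos hd he
  have hm : 0 < d * e' * f' := Nat.mul_pos hde hf
  have := finite_adjoinRoot_X_pow_sub_C t hde
  have := finite_adjoinRoot_X_pow_sub_C t hdf
  have := finite_adjoinRoot_X_pow_sub_C t hm
  set B := AdjoinRoot (Polynomial.X ^ (d * e' * f') - Polynomial.C t : Polynomial K) with hB
  set y : B := AdjoinRoot.root (Polynomial.X ^ (d * e' * f') - Polynomial.C t : Polynomial K)
    with hy
  have hym : y ^ (d * e' * f') = algebraMap K B t := root_pow_eq t _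
  let X : Fin d → B := fun _ => y ^ f'
  let Z : Fin d → B := fun i => algebraMap K B (ζ ^ (i : ℕ)) * y ^ e'
  have hX : Polynomial.aeval X (Polynomial.X ^ (d * e') - Polynomial.C t : Polynomial K) = 0 := by
    funext i
    have h : (y ^ f') ^ (d * e') = algebraMap K B t := by
      rw [← hym]; ring
    simp [X, h]
  have hZ : Polynomial.aeval Z (Polynomial.X ^ (d * f') - Polynomial.C t : Polynomial K) = 0 := by
    funext i
    have h := twist_pow t d e' f' ζ hζ.pow_eq_one y hym i
    simp only [map_sub, map_pow, Polynomial.aeval_X, Polynomial.aeval_C, Pi.sub_apply,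
      Pi.pow_apply, Pi.zero_apply, Pi.algebraMap_apply]
    rw [← h, sub_self]
  let g₁ := AdjoinRoot.liftAlgHom (Polynomial.X ^ (d * e') - Polynomial.C t : Polynomial K)
    (Algebra.ofId K (Fin d → B)) X hX
  let g₂ := AdjoinRoot.liftAlgHom (Polynomial.X ^ (d * f') - Polynomial.C t : Polynomial K)
    (Algebra.ofId K (Fin d → B)) Z hZ
  have hg₁ : g₁ (AdjoinRoot.root _) = X := AdjoinRoot.liftAlgHom_root _ _ _ _
  have hg₂ : g₂ (AdjoinRoot.root _) = Z := AdjoinRoot.liftAlgHom_root _ _ _ _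
  let φ := Algebra.TensorProduct.productMap g₁ g₂
  have hXφ : X ∈ φ.range :=
    ⟨AdjoinRoot.root _ ⊗ₜ 1, (Algebra.TensorProduct.productMap_left_apply g₁ g₂ _).trans hg₁⟩
  have hZφ : Z ∈ φ.range :=
    ⟨1 ⊗ₜ AdjoinRoot.root _, (Algebra.TensorProduct.productMap_right_apply g₁ g₂ _).trans hg₂⟩
  have htop : φ.range = ⊤ := by
    refine eq_top_of_mem t ht d e' f' hd he hf hcop ζ hζ y hym (fun b => ?_) φ.range hXφ hZφ
    obtain ⟨p, rfl⟩ := AdjoinRoot.mk_surjective b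
    exact ⟨p, AdjoinRoot.aeval_eq p⟩
  have hsurj : Function.Surjective φ := (AlgHom.range_eq_top φ).mp htop
  have hrank : Module.finrank K
      ((AdjoinRoot (Polynomial.X ^ (d * e') - Polynomial.C t : Polynomial K)) ⊗[K]
      (AdjoinRoot (Polynomial.X ^ (d * f') - Polynomial.C t : Polynomial K))) =
      Module.finrank K (Fin d → B) := by
    rw [Module.finrank_tensorProduct, Module.finrank_pi_fintype,
      finrank_adjoinRoot_X_pow_sub_C t hde, finrank_adjoinRoot_X_pow_sub_C t hdf,
      finrank_adjoinRoot_X_pow_sub_C t hm]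
    simp
    ring
  have hinj : Function.Injective φ :=
    (LinearMap.injective_iff_surjective_of_finrank_eq_finrank (f := φ.toLinearMap) hrank).mpr hsurj
  exact ⟨AlgEquiv.ofBijective φ ⟨hinj, hsurj⟩⟩

/-- For positive integers `e`, `f`, there is a `K`-algebra isomorphism
`A_e ⊗_K A_f ≃ (A_{lcm(e,f)})^{gcd(e,f)}`. -/
theorem statement0 (e f : ℕ) (he : 0 < e) (hf : 0 < f) :
    Nonempty ((A e) ⊗[LaurentSeries ℂ] (A f) ≃ₐ[LaurentSeries ℂ]
      (Fin (Nat.gcd e f) → A (Nat.lcm e f))) := by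
  obtain ⟨e', f', hcop, he', hf'⟩ := Nat.exists_coprime e f
  have hd : 0 < Nat.gcd e f := Nat.gcd_pos_of_pos_left _ he
  have he'0 : 0 < e' := Nat.pos_of_ne_zero fun h => by simp [h] at he'; omega
  have hf'0 : 0 < f' := Nat.pos_of_ne_zero fun h => by simp [h] at hf'; omega
  have hed : e = Nat.gcd e f * e' := by rw [mul_comm]; exact he'
  have hfd : f = Nat.gcd e f * f' := by rw [mul_comm]; exact hf'
  have hlcm : Nat.lcm e f = Nat.gcd e f * e' * f' := by
    apply Nat.eq_of_mul_eq_mul_left hd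
    rw [Nat.gcd_mul_lcm, ← hed, mul_left_comm, ← hfd]
  have ht : tvar ≠ 0 := HahnSeries.single_ne_zero one_ne_zero
  have hζ := (Complex.isPrimitiveRoot_exp f hf.ne').map_of_injective
    (f := algebraMap ℂ (LaurentSeries ℂ)) (algebraMap ℂ (LaurentSeries ℂ)).injective
  rw [hlcm]
  generalize Nat.gcd e f = d at *
  subst hed hfd
  exact tensor_equiv_pi tvar ht d e' f' hd he'0 hf'0 hcop.symm _ hζ
end

section
/- Let ℓ and m be integers with ℓ ≥ 4 and m ≥ 4, let λ be a partition of ℓ and μ a partition of m, and assume there is no positive integer r such that λ is homogeneous of index r and μ is homogeneous of index r. Then E(λ,μ) ≥ 2 or F(λ,μ) ≥ 2. -/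
/-!
Since `gcd(e,f) * lcm(e,f) = e * f`, the summand of `E` at `(e,f)` is `f - gcd(e,f)` and that of `F`
is `e - gcd(e,f)`. If the partitions are not homogeneous of a common index, some parts `e` of `λ` and
`f` of `μ` differ; as `F(λ,μ) = E(μ,λ)`, take `e < f` (`Efn_or_Ffn_of_lt`). Then `gcd(e,f)` is a
proper divisor of `f`, so the summand of `E` is at least `f / 2`. If `E ≤ 1`, this forces
`e = 1`, `f = 2` with summand `1`, so all other summands of `E` vanish. Pairing the part `1` of `λ` with
the remaining parts of `μ` shows that those are all `1`, and there are at least two of them since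
`m ≥ 4`. Pairing another part `e'` of `λ` with `2` shows that `e'` is even. Hence
`F` has two summands `e' - 1 ≥ 1`.
-/

/-- A partition of `N`: a multiset of positive integers summing to `N`. -/
def IsPartition (N : ℕ) (lam : Multiset ℕ) : Prop :=
  (∀ x ∈ lam, 0 < x) ∧ lam.sum = N

/-- A partition is homogeneous of index `r` if every part equals `r`. -/
def IsHomogeneous (r : ℕ) (lam : Multiset ℕ) : Prop :=
  ∀ x ∈ lam, x = r

/-- `E(λ,μ) = Σ_{(e,f)} gcd(e,f) * (lcm(e,f)/e - 1)` over ordered pairs of parts. -/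
def Efn (lam mu : Multiset ℕ) : ℕ :=
  ((lam ×ˢ mu).map (fun p => Nat.gcd p.1 p.2 * (Nat.lcm p.1 p.2 / p.1 - 1))).sum

/-- `F(λ,μ) = Σ_{(e,f)} gcd(e,f) * (lcm(e,f)/f - 1)` over ordered pairs of parts. -/
def Ffn (lam mu : Multiset ℕ) : ℕ :=
  ((lam ×ˢ mu).map (fun p => Nat.gcd p.1 p.2 * (Nat.lcm p.1 p.2 / p.2 - 1))).sum

lemma gcd_mul_lcm_div_left_sub_one {e : ℕ} (f : ℕ) (he : 0 < e) :
    Nat.gcd e f * (Nat.lcm e f / e - 1) = f - Nat.gcd e f := by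
  have h1 : Nat.lcm e f / e = f / Nat.gcd e f := by
    rw [Nat.lcm, Nat.mul_div_assoc _ (Nat.gcd_dvd_right e f), Nat.mul_div_cancel_left _ he]
  rw [h1, Nat.mul_sub, Nat.mul_div_cancel' (Nat.gcd_dvd_right e f), mul_one]

lemma Efn_eq_sum {lam : Multiset ℕ} (mu : Multiset ℕ) (hl : ∀ x ∈ lam, 0 < x) :
    Efn lam mu = (lam.map fun e => (mu.map fun f => f - Nat.gcd e f).sum).sum := by
  have h : Efn lam mu = ((lam ×ˢ mu).map fun p => p.2 - Nat.gcd p.1 p.2).sum := by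
    unfold Efn
    congr 1
    refine Multiset.map_congr rfl fun p hp => ?_
    exact gcd_mul_lcm_div_left_sub_one _ (hl _ (Multiset.mem_product.1 hp).1)
  rw [h]
  simp [SProd.sprod, Multiset.product, Multiset.map_bind, Multiset.sum_bind]

lemma Ffn_eq_Efn_swap (lam mu : Multiset ℕ) : Ffn lam mu = Efn mu lam := by
  unfold Ffn Efn
  simp only [SProd.sprod, Multiset.product, Multiset.map_bind, Multiset.sum_bind,
    Multiset.map_map, Function.comp_def]
  rw [Multiset.sum_map_sum_map]
  simp only [Nat.gcd_comm, Nat.lcm_comm]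

/-- The case where some part of `λ` is smaller than some part of `μ`. The other case follows
by exchanging the partitions, which exchanges `E` and `F`. -/
lemma Efn_or_Ffn_of_lt {lam mu : Multiset ℕ} (hl : 4 ≤ lam.sum) (hm : 4 ≤ mu.sum)
    (hlam : ∀ x ∈ lam, 0 < x) (hmu : ∀ x ∈ mu, 0 < x) {e f : ℕ} (he : e ∈ lam) (hf : f ∈ mu)
    (hef : e < f) : 2 ≤ Efn lam mu ∨ 2 ≤ Ffn lam mu := by
  by_contra! hc
  obtain ⟨hE, hF⟩ := hc
  rw [Ffn_eq_Efn_swap, Efn_eq_sum _ hmu] at hF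
  rw [Efn_eq_sum _ hlam] at hE
  have he0 := hlam e he
  obtain ⟨l, rfl⟩ := Multiset.exists_cons_of_mem he
  obtain ⟨n, rfl⟩ := Multiset.exists_cons_of_mem hf
  simp only [Multiset.map_cons, Multiset.sum_cons, Multiset.sum_map_add] at hE hF hl hm
  -- `gcd e f` is a proper divisor of `f`, so `f - gcd e f ≥ f / 2`, while this summand is at most `1`.
  have hf2 : f ≤ 2 := by
    obtain ⟨k, hk⟩ := Nat.gcd_dvd_right e f
    have hg : Nat.gcd e f ≤ e := Nat.gcd_le_left f he0
    have hk2 : 2 ≤ k := by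
      by_contra hk1
      have : k = 0 ∨ k = 1 := by omega
      rcases this with rfl | rfl <;> omega
    have := Nat.mul_le_mul_left (Nat.gcd e f) hk2
    omega
  obtain rfl : e = 1 := by omega
  obtain rfl : f = 2 := by omega
  -- The summand of `E` at `(1, 2)` is `1`, so every other summand of `E` vanishes.
  obtain ⟨e', he'⟩ := Multiset.exists_mem_of_ne_zero (s := l) (by rintro rfl; simp at hl)
  obtain ⟨f', hf'⟩ := Multiset.exists_mem_of_ne_zero (s := n) (by rintro rfl; simp at hm)
  have he'0 := hlam e' (Multiset.mem_cons_of_mem he')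
  have hf'0 := hmu f' (Multiset.mem_cons_of_mem hf')
  obtain ⟨l, rfl⟩ := Multiset.exists_cons_of_mem he'
  obtain ⟨n, rfl⟩ := Multiset.exists_cons_of_mem hf'
  simp only [Multiset.map_cons, Multiset.sum_cons, Multiset.sum_map_add, Nat.gcd_one_left,
    Nat.gcd_one_right] at hE hF hl hm
  obtain rfl : f' = 1 := by omega
  obtain ⟨f'', hf''⟩ := Multiset.exists_mem_of_ne_zero (s := n) (by rintro rfl; simp at hm)
  have hf''0 := hmu f'' (by simp [hf''])
  obtain ⟨n, rfl⟩ := Multiset.exists_cons_of_mem hf''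
  simp only [Multiset.map_cons, Multiset.sum_cons, Multiset.sum_map_add, Nat.gcd_one_left,
    Nat.gcd_one_right] at hE hF
  obtain rfl : f'' = 1 := by omega
  -- `e'` is even, and the pairs of `e'` with the two parts `1` each contribute `e' - 1` to `F`.
  have hgcd : 2 ≤ Nat.gcd e' 2 := by omega
  have := Nat.gcd_le_left 2 he'0
  simp only [Nat.gcd_one_left] at hF
  omega

theorem statement1 (ℓ m : ℕ) (hl : 4 ≤ ℓ) (hm : 4 ≤ m)
    (lam mu : Multiset ℕ) (hlam : IsPartition ℓ lam) (hmu : IsPartition m mu)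
    (h : ¬ ∃ r : ℕ, 0 < r ∧ IsHomogeneous r lam ∧ IsHomogeneous r mu) :
    2 ≤ Efn lam mu ∨ 2 ≤ Ffn lam mu := by
  obtain ⟨hlp, rfl⟩ := hlam
  obtain ⟨hmp, rfl⟩ := hmu
  have hne : ∃ e ∈ lam, ∃ f ∈ mu, e ≠ f := by
    by_contra! hc
    obtain ⟨e, he⟩ := Multiset.exists_mem_of_ne_zero (s := lam) (by rintro rfl; simp at hl)
    obtain ⟨f, hf⟩ := Multiset.exists_mem_of_ne_zero (s := mu) (by rintro rfl; simp at hm)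
    exact h ⟨e, hlp e he, fun x hx => (hc x hx f hf).trans (hc e he f hf).symm,
      fun y hy => (hc e he y hy).symm⟩
  obtain ⟨e, he, f, hf, hef⟩ := hne
  rcases lt_or_gt_of_ne hef with hlt | hlt
  · exact Efn_or_Ffn_of_lt hl hm hlp hmp he hf hlt
  · have := Efn_or_Ffn_of_lt hm hl hmp hlp hf he hlt
    rw [Ffn_eq_Efn_swap, ← Ffn_eq_Efn_swap lam mu] at this
    exact this.symm
end

section
/- Let ℓ and m be integers with ℓ ≥ 7 and m ≥ 7, let λ be a partition of ℓ and μ a partition of m, and assume there is no positive integer r such that λ is homogeneous of index r and μ is homogeneous of index r. Then E(λ,μ) ≥ 3 or F(λ,μ) ≥ 3. -/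
/-- A single pair, counted with multiplicity, contributes at most the whole sum. -/
lemma count_mul_le_sum (g : ℕ × ℕ → ℕ) (s t : Multiset ℕ) (e f : ℕ) :
    s.count e * t.count f * g (e, f) ≤ ((s ×ˢ t).map g).sum := by
  have key : s.count e * t.count f ≤ (s ×ˢ t).count (e, f) := by
    induction s using Multiset.induction_on with
    | empty => simp
    | cons a s ih =>
      rw [Multiset.cons_product, Multiset.count_add, Multiset.count_cons]
      split_ifs with h
      · subst h
        rw [Multiset.count_map_eq_count' _ _ (Prod.mk_right_injective e)]
        linarith
      · linarith
  have hle : Multiset.replicate (s.count e * t.count f) (e, f) ≤ s ×ˢ t := by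
    exact Multiset.le_count_iff_replicate_le.1 key
  obtain ⟨u, hu⟩ := Multiset.le_iff_exists_add.1 hle
  rw [hu]
  simp

lemma term_eq {e f : ℕ} (he : 0 < e) :
    Nat.gcd e f * (Nat.lcm e f / e - 1) = f - Nat.gcd e f := by
  have hg : Nat.gcd e f * (Nat.lcm e f / e) = f := by
    rw [← Nat.mul_div_assoc _ (Nat.dvd_lcm_left e f), Nat.gcd_mul_lcm,
      Nat.mul_div_cancel_left _ he]
  rw [Nat.mul_sub, hg, mul_one]

lemma count_mul_le_Efn (lam mu : Multiset ℕ) (e f : ℕ) (he : 0 < e) :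
    lam.count e * mu.count f * (f - Nat.gcd e f) ≤ Efn lam mu := by
  have := count_mul_le_sum (fun p => Nat.gcd p.1 p.2 * (Nat.lcm p.1 p.2 / p.1 - 1)) lam mu e f
  simpa only [Efn, term_eq he] using this

lemma count_mul_le_Ffn (lam mu : Multiset ℕ) (e f : ℕ) (hf : 0 < f) :
    lam.count e * mu.count f * (e - Nat.gcd e f) ≤ Ffn lam mu := by
  have h := count_mul_le_sum (fun p => Nat.gcd p.1 p.2 * (Nat.lcm p.1 p.2 / p.2 - 1)) lam mu e f
  have ht : Nat.gcd e f * (Nat.lcm e f / f - 1) = e - Nat.gcd e f := by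
    rw [Nat.gcd_comm, Nat.lcm_comm, term_eq hf]
  simpa only [Ffn, ht] using h

/-- A proper divisor is at most half, so a defect `f - gcd e f ≤ 2` forces `f ∣ e` once `5 ≤ f`. -/
lemma dvd_of_sub_gcd_le {e f : ℕ} (hf : 5 ≤ f) (h : f - Nat.gcd e f ≤ 2) : f ∣ e := by
  obtain ⟨k, hk⟩ := Nat.gcd_dvd_right e f
  have hk1 : k = 1 := by
    rcases k with _ | _ | k
    · omega
    · rfl
    · exfalso
      have : Nat.gcd e f * 2 ≤ f := by
        conv_rhs => rw [hk]
        exact Nat.mul_le_mul_left _ (by omega)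
      omega
  rw [hk1, mul_one] at hk
  rw [hk]
  exact Nat.gcd_dvd_left e f

/-- If every part that is at least `5`, on either side, divides all parts of the other multiset, then
one such part `f` of `t` forces every part on both sides to equal `f`. -/
lemma homogeneous_of_large {s t : Multiset ℕ} (hs : ∀ x ∈ s, 0 < x) (ht : ∀ x ∈ t, 0 < x)
    (hs0 : s.sum ≠ 0)
    (h1 : ∀ e ∈ s, ∀ f ∈ t, 5 ≤ f → f ∣ e) (h2 : ∀ e ∈ s, ∀ f ∈ t, 5 ≤ e → e ∣ f)
    {f : ℕ} (hf : f ∈ t) (hf5 : 5 ≤ f) : IsHomogeneous f s ∧ IsHomogeneous f t := by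
  have key : IsHomogeneous f s := fun e he => by
    have hd := h1 e he f hf hf5
    have : f ≤ e := Nat.le_of_dvd (hs e he) hd
    exact Nat.dvd_antisymm (h2 e he f hf (by omega)) hd
  refine ⟨key, fun x hx => ?_⟩
  obtain ⟨e, he⟩ : ∃ e, e ∈ s := Multiset.exists_mem_of_ne_zero (by rintro rfl; simp at hs0)
  obtain rfl := key e he
  have hd := h2 e he x hx hf5
  have : e ≤ x := Nat.le_of_dvd (ht x hx) hd
  exact Nat.dvd_antisymm (h1 e he x hx (by omega)) hd

/-! The next three lemmas split a bound on `x * y` into linear cases. -/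

lemma mul_le_two {x y : ℕ} (h : x * y ≤ 2) :
    x = 0 ∨ y = 0 ∨ (x = 1 ∧ y ≤ 2) ∨ (x ≤ 2 ∧ y = 1) := by
  rcases x with _ | _ | x <;> rcases y with _ | _ | y <;> simp at * <;> try omega
  nlinarith

lemma mul_le_one {x y : ℕ} (h : x * y * 2 ≤ 2) : x = 0 ∨ y = 0 ∨ (x = 1 ∧ y = 1) := by
  rcases mul_le_two (x := x) (y := y) (by omega) with h1 | h1 | ⟨h1, h2⟩ | ⟨h1, h2⟩
  · exact Or.inl h1
  · exact Or.inr (Or.inl h1)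
  · subst h1; omega
  · subst h2; omega

lemma mul_le_zero {x y : ℕ} (h : x * y * 3 ≤ 2) : x = 0 ∨ y = 0 :=
  Nat.mul_eq_zero.1 (by omega)

/-- The arithmetic of multiplicities when all parts are at most `4`: `aᵢ`, `bᵢ` are the
multiplicities of `i` in the two partitions. -/
lemma counts_small {a1 a2 a3 a4 b1 b2 b3 b4 : ℕ}
    (ha : 7 ≤ a1 + 2 * a2 + 3 * a3 + 4 * a4) (hb : 7 ≤ b1 + 2 * b2 + 3 * b3 + 4 * b4)
    (e12 : a1 * b2 ≤ 2) (e13 : a1 * b3 * 2 ≤ 2) (e14 : a1 * b4 * 3 ≤ 2)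
    (e23 : a2 * b3 * 2 ≤ 2) (e24 : a2 * b4 * 2 ≤ 2)
    (e34 : a3 * b4 * 3 ≤ 2)
    (f21 : a2 * b1 ≤ 2) (f31 : a3 * b1 * 2 ≤ 2) (f41 : a4 * b1 * 3 ≤ 2)
    (f32 : a3 * b2 * 2 ≤ 2) (f42 : a4 * b2 * 2 ≤ 2)
    (f43 : a4 * b3 * 3 ≤ 2) :
    (a2 = 0 ∧ a3 = 0 ∧ a4 = 0 ∧ b2 = 0 ∧ b3 = 0 ∧ b4 = 0) ∨
    (a1 = 0 ∧ a3 = 0 ∧ a4 = 0 ∧ b1 = 0 ∧ b3 = 0 ∧ b4 = 0) ∨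
    (a1 = 0 ∧ a2 = 0 ∧ a4 = 0 ∧ b1 = 0 ∧ b2 = 0 ∧ b4 = 0) ∨
    (a1 = 0 ∧ a2 = 0 ∧ a3 = 0 ∧ b1 = 0 ∧ b2 = 0 ∧ b3 = 0) := by
  have h1 := mul_le_zero e14
  have h2 := mul_le_zero e34
  have h3 := mul_le_zero f41
  have h4 := mul_le_zero f43
  have h5 := mul_le_one e13
  have h6 := mul_le_one e23
  have h7 := mul_le_one e24
  have h9 := mul_le_one f31
  have h10 := mul_le_one f32
  have h11 := mul_le_one f42
  have h12 := mul_le_two e12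
  have h13 := mul_le_two f21
  clear e12 e13 e14 e23 e24 e34 f21 f31 f41 f32 f42 f43
  rcases h1 with h1 | h1 <;> rcases h2 with h2 | h2 <;> rcases h3 with h3 | h3 <;>
    rcases h4 with h4 | h4 <;> subst_vars <;> simp at * <;> grind (splits := 40)

theorem statement2 (ℓ m : ℕ) (hl : 7 ≤ ℓ) (hm : 7 ≤ m)
    (lam mu : Multiset ℕ) (hlam : IsPartition ℓ lam) (hmu : IsPartition m mu)
    (h : ¬ ∃ r : ℕ, 0 < r ∧ IsHomogeneous r lam ∧ IsHomogeneous r mu) :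
    3 ≤ Efn lam mu ∨ 3 ≤ Ffn lam mu := by
  by_contra! hc
  obtain ⟨hE, hF⟩ := hc
  obtain ⟨hlp, hls⟩ := hlam
  obtain ⟨hmp, hms⟩ := hmu
  have hEb (e f : ℕ) (he : 0 < e) : lam.count e * mu.count f * (f - Nat.gcd e f) ≤ 2 :=
    (count_mul_le_Efn lam mu e f he).trans (by omega)
  have hFb (e f : ℕ) (hf : 0 < f) : lam.count e * mu.count f * (e - Nat.gcd e f) ≤ 2 :=
    (count_mul_le_Ffn lam mu e f hf).trans (by omega)
  have hpos (e) (he : e ∈ lam) (f) (hf : f ∈ mu) : 0 < lam.count e * mu.count f :=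
    Nat.mul_pos (Multiset.count_pos.2 he) (Multiset.count_pos.2 hf)
  have h1 : ∀ e ∈ lam, ∀ f ∈ mu, 5 ≤ f → f ∣ e := fun e he f hf h5 =>
    dvd_of_sub_gcd_le h5 ((Nat.le_mul_of_pos_left _ (hpos e he f hf)).trans (hEb e f (hlp e he)))
  have h2 : ∀ e ∈ lam, ∀ f ∈ mu, 5 ≤ e → e ∣ f := fun e he f hf h5 =>
    dvd_of_sub_gcd_le h5 (by
      rw [Nat.gcd_comm]
      exact (Nat.le_mul_of_pos_left _ (hpos e he f hf)).trans (hFb e f (hmp f hf)))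
  have hmu4 : ∀ f ∈ mu, f < 5 := fun f hf => by
    by_contra! h5
    exact h ⟨f, by omega, homogeneous_of_large hlp hmp (by omega) h1 h2 hf h5⟩
  have hlam4 : ∀ e ∈ lam, e < 5 := fun e he => by
    by_contra! h5
    exact h ⟨e, by omega, (homogeneous_of_large hmp hlp (by omega)
      (fun f hf e he => h2 e he f hf) (fun f hf e he => h1 e he f hf) he h5).symm⟩
  have hsum (s : Multiset ℕ) (hs : ∀ x ∈ s, x < 5) :
      s.sum = s.count 1 + 2 * s.count 2 + 3 * s.count 3 + 4 * s.count 4 := by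
    rw [Finset.sum_multiset_count_of_subset s (Finset.range 5)
      (fun x hx => Finset.mem_range.2 (hs x (Multiset.mem_toFinset.1 hx)))]
    simp [Finset.sum_range_succ]
    ring
  have hom (s : Multiset ℕ) (hp : ∀ x ∈ s, 0 < x) (hs : ∀ x ∈ s, x < 5) (r : ℕ)
      (h0 : ∀ i, 0 < i → i < 5 → i ≠ r → s.count i = 0) : IsHomogeneous r s := fun x hx => by
    by_contra hne
    exact Multiset.count_eq_zero.1 (h0 x (hp x hx) (hs x hx) hne) hx
  have hla := hsum lam hlam4
  have hmb := hsum mu hmu4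
  have hcases := counts_small (a1 := lam.count 1) (b1 := mu.count 1) (by omega) (by omega)
    (by simpa using hEb 1 2 (by omega)) (by simpa using hEb 1 3 (by omega))
    (by simpa using hEb 1 4 (by omega)) (hEb 2 3 (by omega)) (hEb 2 4 (by omega))
    (hEb 3 4 (by omega))
    (by simpa using hFb 2 1 (by omega)) (by simpa using hFb 3 1 (by omega))
    (by simpa using hFb 4 1 (by omega)) (hFb 3 2 (by omega)) (hFb 4 2 (by omega))
    (hFb 4 3 (by omega))
  rcases hcases with hh | hh | hh | hh
  · exact h ⟨1, by omega, hom lam hlp hlam4 1 fun i _ _ _ => by interval_cases i <;> omega,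
      hom mu hmp hmu4 1 fun i _ _ _ => by interval_cases i <;> omega⟩
  · exact h ⟨2, by omega, hom lam hlp hlam4 2 fun i _ _ _ => by interval_cases i <;> omega,
      hom mu hmp hmu4 2 fun i _ _ _ => by interval_cases i <;> omega⟩
  · exact h ⟨3, by omega, hom lam hlp hlam4 3 fun i _ _ _ => by interval_cases i <;> omega,
      hom mu hmp hmu4 3 fun i _ _ _ => by interval_cases i <;> omega⟩
  · exact h ⟨4, by omega, hom lam hlp hlam4 4 fun i _ _ _ => by interval_cases i <;> omega,
      hom mu hmp hmu4 4 fun i _ _ _ => by interval_cases i <;> omega⟩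
end

section
/- Let λ_1,…,λ_5 and μ_1,…,μ_5 be partitions of 6 such that each λ_i is nontrivial (has at least one part ≥ 2), and such that: Σ_{i=1}^5 Σ_{e a part of λ_i} (e − 1) ≤ 10; Σ_{i=1}^5 Σ_{f a part of μ_i} (f − 1) ≤ 10; Σ_{i=1}^5 E(λ_i, μ_i) ≤ 10; and Σ_{i=1}^5 F(λ_i, μ_i) ≤ 10. Then there exists a permutation σ of {1,…,5} such that (λ_{σ(1)},…,λ_{σ(5)}) = (1^4 2, 1^4 2, 1^2 2^2, 2^3, 2^3) and (μ_{σ(1)},…,μ_{σ(5)}) = (1^6, 1^4 2, 2^3, 2^3, 2^3). -/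
/-- The eleven partitions of `6`, numbered `0, …, 10`; values at larger arguments are irrelevant.
The partitions `1^6`, `1^4 2`, `1^2 2^2`, `2^3` come first, so that the extremal configuration is
sorted by pair code. -/
def part : ℕ → Multiset ℕ
  | 0 => {1, 1, 1, 1, 1, 1}
  | 1 => {1, 1, 1, 1, 2}
  | 2 => {1, 1, 2, 2}
  | 3 => {2, 2, 2}
  | 4 => {1, 1, 1, 3}
  | 5 => {1, 2, 3}
  | 6 => {1, 1, 4}
  | 7 => {3, 3}
  | 8 => {2, 4}
  | 9 => {1, 5}
  | _ => {6}

/-- The four costs of a pair of partitions: `Σ (e - 1)`, `Σ (f - 1)`, `E`, `F`. -/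
def cost (lam mu : Multiset ℕ) : ℕ × ℕ × ℕ × ℕ :=
  ((lam.map (fun e => e - 1)).sum, (mu.map (fun f => f - 1)).sum, Efn lam mu, Ffn lam mu)

/-- The pairs with nontrivial first member and all costs at most `10`. A row consists of the code
`11 * a + b` of the pair `(part a, part b)`, followed by its four costs. -/
def table : List (ℕ × ℕ × ℕ × ℕ × ℕ) :=
  [(11, 1, 0, 0, 6), (12, 1, 1, 4, 4), (13, 1, 2, 8, 2), (15, 1, 2, 10, 4),
   (23, 2, 1, 2, 8), (24, 2, 2, 4, 4), (25, 2, 3, 6, 0), (26, 2, 2, 8, 8),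
   (27, 2, 3, 10, 4), (28, 2, 3, 10, 4), (35, 3, 2, 0, 6), (36, 3, 3, 0, 0),
   (38, 3, 3, 6, 6), (39, 3, 3, 6, 6), (41, 3, 4, 6, 0), (45, 2, 1, 4, 10),
   (46, 2, 2, 8, 8), (48, 2, 2, 6, 6), (49, 2, 3, 10, 4), (57, 3, 2, 4, 10),
   (58, 3, 3, 6, 6), (59, 3, 2, 4, 10), (60, 3, 3, 6, 6), (61, 3, 3, 8, 8),
   (62, 3, 4, 8, 2), (63, 3, 4, 10, 4), (68, 3, 2, 4, 10), (69, 3, 3, 6, 6),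
   (71, 3, 3, 8, 8), (72, 3, 3, 6, 6), (74, 3, 4, 8, 2), (82, 4, 3, 2, 8),
   (84, 4, 4, 0, 0), (85, 4, 4, 8, 8), (86, 4, 4, 8, 8), (87, 4, 5, 6, 0),
   (91, 4, 3, 0, 6), (93, 4, 3, 4, 10), (94, 4, 3, 2, 8), (95, 4, 4, 8, 8),
   (96, 4, 4, 2, 2), (97, 4, 4, 8, 8), (98, 4, 5, 8, 2), (106, 4, 4, 8, 8),
   (107, 4, 4, 8, 8), (108, 4, 4, 4, 4), (109, 4, 5, 10, 4), (117, 5, 4, 0, 6),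
   (118, 5, 4, 2, 8), (119, 5, 4, 4, 10), (120, 5, 5, 0, 0)]

/-- The multisets underlying the compositions of `n`, built by choosing one part at a time; the first
argument is fuel, sufficient as soon as it is at least `n`. -/
def compositions : ℕ → ℕ → List (Multiset ℕ)
  | _, 0 => [0]
  | 0, _ + 1 => []
  | k + 1, n + 1 =>
    (List.range (n + 1)).flatMap fun x => (compositions k (n - x)).map (fun t => (x + 1) ::ₘ t)

theorem mem_compositions (k : ℕ) : ∀ (n : ℕ) (s : Multiset ℕ), n ≤ k → IsPartition n s →
    s ∈ compositions k n := by
  induction k with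
  | zero =>
    rintro n s hn ⟨hpos, hsum⟩
    obtain rfl : n = 0 := by omega
    have : s = 0 := Multiset.eq_zero_of_forall_notMem fun x hx =>
      absurd (Multiset.le_sum_of_mem hx) (by have := hpos x hx; omega)
    simp [compositions, this]
  | succ k ih =>
    rintro n s hn ⟨hpos, hsum⟩
    cases n with
    | zero =>
      have : s = 0 := Multiset.eq_zero_of_forall_notMem fun x hx =>
        absurd (Multiset.le_sum_of_mem hx) (by have := hpos x hx; omega)
      simp [compositions, this]
    | succ n =>
      obtain ⟨x, hx⟩ : ∃ x, x ∈ s := by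
        refine Multiset.exists_mem_of_ne_zero ?_
        rintro rfl
        simp at hsum
      obtain ⟨t, rfl⟩ := Multiset.exists_cons_of_mem hx
      have hx0 := hpos x hx
      rw [Multiset.sum_cons] at hsum
      simp only [compositions, List.mem_flatMap, List.mem_range, List.mem_map]
      refine ⟨x - 1, by omega, t, ih _ _ (by omega) ⟨fun y hy => ?_, by omega⟩, ?_⟩
      · exact hpos y (Multiset.mem_cons_of_mem hy)
      · rw [Nat.sub_add_cancel hx0]

theorem exists_part {s : Multiset ℕ} (hs : IsPartition 6 s) : ∃ a < 11, s = part a := by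
  have key : ∀ s ∈ compositions 6 6, ∃ a < 11, s = part a := by decide +kernel
  exact key s (mem_compositions 6 6 s le_rfl hs)

set_option synthInstance.maxHeartbeats 400000 in
set_option synthInstance.maxSize 4000 in
/-- Code `a = 0` is excluded because `part 0` is the trivial partition. -/
theorem row_mem_table : ∀ a < 11, ∀ b < 11, a ≠ 0 → cost (part a) (part b) ≤ (10, 10, 10, 10) →
    (11 * a + b, cost (part a) (part b)) ∈ table := by
  decide +kernel

set_option synthInstance.maxHeartbeats 400000 in
set_option synthInstance.maxSize 4000 in
/-- The pruned search: five rows with nondecreasing codes and total costs at most `10` have codes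
`11 * 1 + 0`, `11 * 1 + 1`, `11 * 2 + 3`, `11 * 3 + 3`, `11 * 3 + 3`. -/
theorem search :
    ∀ r₀ ∈ table, ∀ r₁ ∈ table, r₀.1 ≤ r₁.1 → r₀.2 + r₁.2 ≤ (10, 10, 10, 10) →
    ∀ r₂ ∈ table, r₁.1 ≤ r₂.1 → r₀.2 + r₁.2 + r₂.2 ≤ (10, 10, 10, 10) →
    ∀ r₃ ∈ table, r₂.1 ≤ r₃.1 → r₀.2 + r₁.2 + r₂.2 + r₃.2 ≤ (10, 10, 10, 10) →
    ∀ r₄ ∈ table, r₃.1 ≤ r₄.1 → r₀.2 + r₁.2 + r₂.2 + r₃.2 + r₄.2 ≤ (10, 10, 10, 10) →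
    r₀.1 = 11 ∧ r₁.1 = 12 ∧ r₂.1 = 25 ∧ r₃.1 = 36 ∧ r₄.1 = 36 := by
  decide +kernel

theorem statement6 (lam mu : Fin 5 → Multiset ℕ)
    (hlam : ∀ i, IsPartition 6 (lam i)) (hmu : ∀ i, IsPartition 6 (mu i))
    (hnt : ∀ i, ∃ e ∈ lam i, 2 ≤ e)
    (hRL : ∑ i, ((lam i).map (fun e => e - 1)).sum ≤ 10)
    (hRM : ∑ i, ((mu i).map (fun f => f - 1)).sum ≤ 10)
    (hE : ∑ i, Efn (lam i) (mu i) ≤ 10)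
    (hF : ∑ i, Ffn (lam i) (mu i) ≤ 10) :
    ∃ σ : Equiv.Perm (Fin 5),
      (∀ k, lam (σ k) =
        (![{1, 1, 1, 1, 2}, {1, 1, 1, 1, 2}, {1, 1, 2, 2}, {2, 2, 2}, {2, 2, 2}] :
          Fin 5 → Multiset ℕ) k) ∧
      (∀ k, mu (σ k) =
        (![{1, 1, 1, 1, 1, 1}, {1, 1, 1, 1, 2}, {2, 2, 2}, {2, 2, 2}, {2, 2, 2}] :
          Fin 5 → Multiset ℕ) k) := by
  have hpair : ∀ i, ∃ a b, a < 11 ∧ b < 11 ∧ a ≠ 0 ∧ lam i = part a ∧ mu i = part b := by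
    intro i
    obtain ⟨a, ha, hla⟩ := exists_part (hlam i)
    obtain ⟨b, hb, hmb⟩ := exists_part (hmu i)
    refine ⟨a, b, ha, hb, ?_, hla, hmb⟩
    rintro rfl
    obtain ⟨e, he, h2⟩ := hnt i
    rw [hla] at he
    simp only [part, Multiset.insert_eq_cons, Multiset.mem_cons, Multiset.mem_singleton] at he
    omega
  choose a b ha hb ha0 hla hmb using hpair
  have htot : ∑ i, cost (lam i) (mu i) ≤ (10, 10, 10, 10) := by
    simp only [Prod.le_def, Prod.fst_sum, Prod.snd_sum]
    exact ⟨hRL, hRM, hE, hF⟩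
  have hmem : ∀ i, (11 * a i + b i, cost (lam i) (mu i)) ∈ table := by
    intro i
    have hi : cost (lam i) (mu i) ≤ (10, 10, 10, 10) :=
      (Finset.single_le_sum (f := fun i => cost (lam i) (mu i)) (fun _ _ => zero_le)
        (Finset.mem_univ i)).trans htot
    rw [hla, hmb] at hi ⊢
    exact row_mem_table _ (ha i) _ (hb i) (ha0 i) hi
  obtain ⟨σ, hmono⟩ : ∃ σ : Equiv.Perm (Fin 5), Monotone ((fun i => 11 * a i + b i) ∘ σ) :=
    ⟨_, Tuple.monotone_sort _⟩
  have hsum := htot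
  rw [← Equiv.sum_comp σ, Fin.sum_univ_five] at hsum
  have h3 := le_self_add.trans hsum
  have h2 := le_self_add.trans h3
  have h1 := le_self_add.trans h2
  obtain ⟨e0, e1, e2, e3, e4⟩ := search
    _ (hmem (σ 0)) _ (hmem (σ 1)) (hmono (by decide)) h1 _ (hmem (σ 2)) (hmono (by decide)) h2
    _ (hmem (σ 3)) (hmono (by decide)) h3 _ (hmem (σ 4)) (hmono (by decide)) hsum
  -- A code determines its pair, as the second index is less than `11`.
  have hdec : ∀ k c d, 11 * a (σ k) + b (σ k) = 11 * c + d → d < 11 →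
      lam (σ k) = part c ∧ mu (σ k) = part d := by
    intro k c d h hd
    have hbk := hb (σ k)
    have hc : a (σ k) = c := by omega
    have hd' : b (σ k) = d := by omega
    rw [hla, hmb, hc, hd']
    exact ⟨rfl, rfl⟩
  have f0 := hdec 0 1 0 e0 (by decide)
  have f1 := hdec 1 1 1 e1 (by decide)
  have f2 := hdec 2 2 3 e2 (by decide)
  have f3 := hdec 3 3 3 e3 (by decide)
  have f4 := hdec 4 3 3 e4 (by decide)
  refine ⟨σ, fun k => ?_, fun k => ?_⟩ <;> fin_cases k
  exacts [f0.1, f1.1, f2.1, f3.1, f4.1, f0.2, f1.2, f2.2, f3.2, f4.2]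
end

section
/- Let n ≥ 2 be an integer and let X be a finite set with 4n elements. Let g1, g2, g3, g4 be permutations of X such that g1 and g2 each have cycle type 2^{2n} (i.e., each is a fixed-point-free involution with 2n two-cycles), g3 has cycle type n^4 (four disjoint n-cycles and no fixed points), and g4 and the product g1·g2·g3·g4 are both transpositions. If the subgroup generated by g1, g2, g3, g4 acts transitively on X, then there exists a subset Y ⊆ X, with complement Z = X ∖ Y, such that g1 maps Y onto Z, g2 maps Y onto Z, g3 maps Z onto Z, and g4 maps Z onto Z. -/
/-!
Write `V = X → ℚ`, let `Inv σ` be the space of `σ`-invariant functions, and put `c = g1 * g2` and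
`s = g1 * g2 * g3 * g4`, so that `c⁻¹ = g2 * g1 = g3 * g4 * s` (note `s⁻¹ = s`) is `g3` multiplied by two
transpositions. Let `W = Inv g3 ⊓ Inv g4 ⊓ Inv s`; its elements are also `c`-invariant.

It is enough to find a nonzero `f ∈ W` with `f ∘ g1 = -f`. Then also `f ∘ g2 = -f`, so `|f|` is
invariant under the transitive group generated by the `gᵢ`, hence constant and nonzero, and
`Y = {f > 0}` has the required properties. Such an `f` is an element of the kernel of the map
`f ↦ f + f ∘ g1` from `W` to `Inv g1 ⊓ Inv g2`, so it exists as soon as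
`dim (Inv g1 ⊓ Inv g2) < dim W`. This follows from two facts.

* `2 * dim (Inv g1 ⊓ Inv g2) ≤ dim (Inv c)` (`two_mul_finrank_le`). Two fixed-point-free
  involutions admit a sign function `ε` which both of them negate: the dihedral group they generate
  has orbits that are alternating even cycles (`exists_bipartition`). Multiplication by `ε` carries
  `Inv g1 ⊓ Inv g2` to a subspace of `Inv c` of the same dimension meeting it trivially.
* `dim (Inv c) + 2 ≤ 2 * dim W`. This is a genus inequality of Riemann–Hurwitz type, and is obtained
  by multiplying `g3`, which has four cycles, by one transposition at a time
  (`finrank_inv_mul_swap`).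
-/

open Equiv Module

namespace Statement8

variable {X : Type*}

/-! ### Invariant functions -/

/-- The space of rational functions on `X` that are invariant under the permutation `σ`. -/
def Inv (σ : Perm X) : Submodule ℚ (X → ℚ) where
  carrier := {f | ∀ x, f (σ x) = f x}
  add_mem' := by
    intro f g hf hg x
    simp only [Pi.add_apply, hf x, hg x]
  zero_mem' := fun _ => rfl
  smul_mem' := by
    intro r f hf x
    simp only [Pi.smul_apply, hf x]

/-- The space of rational functions on `X` that are negated by both `g` and `h`. -/
def Anti (g h : Perm X) : Submodule ℚ (X → ℚ) where
  carrier := {f | ∀ x, f (g x) = -f x ∧ f (h x) = -f x}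
  add_mem' := by
    intro f g hf hg x
    simp only [Pi.add_apply, hf x, hg x]
    constructor <;> ring
  zero_mem' := fun _ => by simp
  smul_mem' := by
    intro r f hf x
    simp [hf x]

lemma mem_inv {σ : Perm X} {f : X → ℚ} : f ∈ Inv σ ↔ ∀ x, f (σ x) = f x := Iff.rfl

lemma inv_inf_le_mul (σ τ : Perm X) : Inv σ ⊓ Inv τ ≤ Inv (σ * τ) := by
  rintro f ⟨h1, h2⟩ x
  rw [Perm.mul_apply, h1, h2]

lemma mem_inv_swap [DecidableEq X] {a b : X} {f : X → ℚ} :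
    f ∈ Inv (swap a b) ↔ f a = f b := by
  refine ⟨fun h => by simpa using (h b), fun h x => ?_⟩
  rw [swap_apply_def]
  split_ifs with h1 h2
  · rw [h1, h]
  · rw [h2, h]
  · rfl

/-! ### Multiplication by a transposition -/

/-- Intersecting with the hyperplane `f a = f b` costs at most one dimension. -/
lemma finrank_le_inf_swap [Fintype X] [DecidableEq X] (P : Submodule ℚ (X → ℚ)) (a b : X) :
    finrank ℚ P ≤ finrank ℚ (P ⊓ Inv (swap a b) : Submodule ℚ (X → ℚ)) + 1 := by
  let φ : P →ₗ[ℚ] ℚ :=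
    ((LinearMap.proj a : (X → ℚ) →ₗ[ℚ] ℚ) - LinearMap.proj b).comp P.subtype
  have h1 := φ.finrank_range_add_finrank_ker
  have h2 : finrank ℚ (LinearMap.range φ) ≤ 1 := by
    simpa using (LinearMap.range φ).finrank_le
  have h3 : finrank ℚ (LinearMap.ker φ) ≤
      finrank ℚ (P ⊓ Inv (swap a b) : Submodule ℚ (X → ℚ)) := by
    rw [← Submodule.finrank_map_subtype_eq P (LinearMap.ker φ)]
    apply Submodule.finrank_mono
    rintro _ ⟨f, hf, rfl⟩
    refine ⟨f.2, mem_inv_swap.2 ?_⟩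
    have : f.1 a - f.1 b = 0 := hf
    exact sub_eq_zero.1 this
  omega

/-- If `a` and `b` lie in different cycles of `σ`, as witnessed by the invariant function `w`, then
multiplying by `swap a b` merges these cycles: every `σ * swap a b`-invariant function takes the
same value at `a` and `b`. -/
lemma inv_mul_swap_le [Fintype X] [DecidableEq X] (σ : Perm X) (a b : X) {w : X → ℚ}
    (hw : w ∈ Inv σ) (hab : w a ≠ w b) : Inv (σ * swap a b) ≤ Inv σ ⊓ Inv (swap a b) := by
  intro f hf
  have hne : a ≠ b := fun h => hab (by rw [h])
  -- Invariance of `f` expresses `f ∘ σ` through `f`; both have the same pairing with `w`.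
  have key : ∀ x, f (σ x) = f (swap a b x) := by
    intro x
    have := hf (swap a b x)
    simpa using this
  have e1 : ∑ x, w x * f x = ∑ x, w x * f (swap a b x) := by
    rw [← Equiv.sum_comp σ]
    exact Finset.sum_congr rfl fun x _ => by rw [hw x, key x]
  have e2 : ∑ x, w x * (f x - f (swap a b x)) = (w a - w b) * (f a - f b) := by
    rw [← Finset.sum_subset (Finset.subset_univ {a, b})]
    · rw [Finset.sum_pair hne, swap_apply_left, swap_apply_right]
      ring
    · intro x _ hx
      simp only [Finset.mem_insert, Finset.mem_singleton, not_or] at hx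
      rw [swap_apply_of_ne_of_ne hx.1 hx.2]
      ring
  have e3 : (w a - w b) * (f a - f b) = 0 := by
    rw [← e2]
    simp only [mul_sub, Finset.sum_sub_distrib]
    rw [← e1, sub_self]
  have hfab : f a = f b := by
    rcases mul_eq_zero.1 e3 with h | h
    · exact absurd (sub_eq_zero.1 h) hab
    · exact sub_eq_zero.1 h
  have hs : f ∈ Inv (swap a b) := mem_inv_swap.2 hfab
  exact ⟨fun x => by rw [key, hs], hs⟩

/-- The quantity "number of cycles of `σ` minus twice the number of orbits of a group containing
`σ`" increases by at most one when `σ` is multiplied by a transposition and this transposition is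
adjoined to the group. Here the invariant functions of the group are replaced by any subspace
`W ≤ Inv σ`. -/
lemma finrank_inv_mul_swap [Fintype X] [DecidableEq X] (σ : Perm X) (a b : X)
    (W : Submodule ℚ (X → ℚ)) (hW : W ≤ Inv σ) :
    finrank ℚ (Inv (σ * swap a b)) + 2 * finrank ℚ W ≤
      finrank ℚ (Inv σ) + 2 * finrank ℚ (W ⊓ Inv (swap a b) : Submodule ℚ (X → ℚ)) + 1 := by
  by_cases h : W ≤ Inv (swap a b)
  · rw [inf_eq_left.2 h]
    have h1 := finrank_le_inf_swap (Inv (σ * swap a b)) a b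
    have h2 : Inv (σ * swap a b) ⊓ Inv (swap a b) ≤ Inv σ := by
      refine (inv_inf_le_mul _ _).trans ?_
      rw [mul_assoc, swap_mul_self, mul_one]
    have h3 := Submodule.finrank_mono h2
    omega
  · obtain ⟨w, hw, hwn⟩ := SetLike.not_le_iff_exists.1 h
    have hab : w a ≠ w b := fun e => hwn (mem_inv_swap.2 e)
    have h1 := inv_mul_swap_le σ a b (hW hw) hab
    have h2 : Inv (σ * swap a b) < Inv σ :=
      lt_of_le_of_ne (h1.trans inf_le_left) fun e => hwn (h1 (e ▸ hW hw)).2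
    have h3 := Submodule.finrank_lt_finrank_of_lt h2
    have h4 := finrank_le_inf_swap W a b
    omega

/-- The indicator functions of the nontrivial cycles of `σ` are independent elements of `Inv σ`. -/
lemma card_cycleType_le [Fintype X] [DecidableEq X] (σ : Perm X) :
    σ.cycleType.card ≤ finrank ℚ (Inv σ) := by
  let φ : (σ.cycleFactorsFinset → ℚ) →ₗ[ℚ] Inv σ :=
    { toFun := fun a => ⟨fun x => if h : σ.cycleOf x ∈ σ.cycleFactorsFinset
        then a ⟨σ.cycleOf x, h⟩ else 0, by
          intro x
          have : σ.cycleOf (σ x) = σ.cycleOf x := by simp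
          simp only [this]⟩
      map_add' := by
        intro a b
        ext x
        by_cases h : σ.cycleOf x ∈ σ.cycleFactorsFinset <;> simp [h]
      map_smul' := by
        intro r a
        ext x
        by_cases h : σ.cycleOf x ∈ σ.cycleFactorsFinset <;> simp [h] }
  have hφ : Function.Injective φ := by
    intro a b hab
    funext ⟨τ, hτ⟩
    obtain ⟨x, hx⟩ := (Perm.mem_cycleFactorsFinset_iff.1 hτ).1.nonempty_support
    have hc : τ = σ.cycleOf x := Perm.cycle_is_cycleOf hx hτ
    subst hc
    have := congrFun (congrArg Subtype.val hab) x
    simpa [φ, hτ] using this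
  have h := LinearMap.finrank_le_finrank_of_injective hφ
  rw [finrank_fintype_fun_eq_card, Fintype.card_coe] at h
  rwa [Perm.cycleType_def, Multiset.card_map]

/-! ### Pairs of fixed-point-free involutions -/

lemma involution_of_cycleType [Fintype X] [DecidableEq X] {m : ℕ} {g : Perm X}
    (hcard : Fintype.card X = 2 * m) (hg : g.cycleType = Multiset.replicate m 2) :
    (∀ x, g (g x) = x) ∧ ∀ x, g x ≠ x := by
  constructor
  · have h : g ^ 2 = 1 := by
      rw [← orderOf_dvd_iff_pow_eq_one, ← Perm.lcm_cycleType, Multiset.lcm_dvd]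
      intro b hb
      rw [hg] at hb
      rw [Multiset.eq_of_mem_replicate hb]
    intro x
    have := Perm.congr_fun h x
    simpa [pow_two] using this
  · have h : g.support = Finset.univ := by
      rw [← Finset.card_eq_iff_eq_univ, ← Perm.sum_cycleType, hg, hcard]
      simp [mul_comm]
    intro x
    exact Perm.mem_support.1 (h ▸ Finset.mem_univ x)

lemma conj_mul {g h : Perm X} (hg : ∀ x, g (g x) = x) (hh : ∀ x, h (h x) = x) :
    g * (g * h) * g⁻¹ = (g * h)⁻¹ := by
  have ig : g⁻¹ = g := inv_eq_of_mul_eq_one_left (Equiv.ext hg)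
  have ih : h⁻¹ = h := inv_eq_of_mul_eq_one_left (Equiv.ext hh)
  have e : g * g = 1 := Equiv.ext hg
  rw [mul_inv_rev, ig, ih, ← mul_assoc, e, one_mul]

/-- For fixed-point-free involutions `g` and `h`, the points `x` and `g x` lie in different cycles
of `g * h`: if `(g * h) ^ k` carries one to the other, then the midpoint of the corresponding
alternating path is fixed by `g` or by `h`. -/
lemma not_sameCycle {g h : Perm X} (hg : ∀ x, g (g x) = x) (hg' : ∀ x, g x ≠ x)
    (hh : ∀ x, h (h x) = x) (hh' : ∀ x, h x ≠ x) (x : X) :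
    ¬ (g * h).SameCycle x (g x) := by
  have conj : ∀ j : ℤ, (g * h) ^ (-j) * g = g * (g * h) ^ j := by
    intro j
    have h1 := conj_mul hg hh
    have h2 : g * (g * h) ^ j * g⁻¹ = (g * h) ^ (-j) := by
      rw [← conj_zpow, h1, inv_zpow, zpow_neg]
    rw [← h2, mul_assoc, inv_mul_cancel, mul_one]
  rintro ⟨k, hk⟩
  rcases Int.even_or_odd' k with ⟨j, rfl | rfl⟩
  · apply hg' (((g * h) ^ j) x)
    rw [← Perm.mul_apply, ← conj, Perm.mul_apply, ← hk, ← Perm.mul_apply, ← zpow_add]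
    congr 2
    ring
  · apply hh' (((g * h) ^ j) x)
    apply g.injective
    have e : g (((g * h) ^ j) x) = ((g * h) ^ (1 + j)) x := by
      rw [← Perm.mul_apply, ← conj, Perm.mul_apply, ← hk, ← Perm.mul_apply, ← zpow_add]
      congr 2
      ring
    rw [e, zpow_add, zpow_one]
    rfl

/-- The alternating cycles formed by two fixed-point-free involutions can be 2-coloured. -/
lemma exists_bipartition {g h : Perm X} (hg : ∀ x, g (g x) = x) (hg' : ∀ x, g x ≠ x)
    (hh : ∀ x, h (h x) = x) (hh' : ∀ x, h x ≠ x) :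
    ∃ S : Set X, ∀ x, (g x ∈ S ↔ x ∉ S) ∧ (h x ∈ S ↔ x ∉ S) := by
  have conj := conj_mul hg hh
  have hsc : ∀ x y, (g * h).SameCycle x y → (g * h).SameCycle (g x) (g y) := by
    intro x y hxy
    rw [← Perm.sameCycle_inv, ← conj, Perm.sameCycle_conj]
    simpa using hxy
  -- The orbits of the dihedral group: each one is a cycle of `g * h` together with its image.
  let R : Setoid X :=
    { r := fun x y => (g * h).SameCycle x y ∨ (g * h).SameCycle (g x) y
      iseqv :=
        { refl := fun x => Or.inl (Perm.SameCycle.refl _ _)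
          symm := by
            rintro x y (h1 | h1)
            · exact Or.inl h1.symm
            · right
              have := hsc _ _ h1
              rw [hg] at this
              exact this.symm
          trans := by
            rintro x y z (h1 | h1) (h2 | h2)
            · exact Or.inl (h1.trans h2)
            · exact Or.inr ((hsc _ _ h1).trans h2)
            · exact Or.inr (h1.trans h2)
            · left
              have := hsc _ _ h1
              rw [hg] at this
              exact this.trans h2 } }
  -- In every orbit, `S` contains the cycle of `g * h` through a chosen representative.
  let r : X → X := fun x => (Quotient.mk R x).out
  have hr : ∀ x, (g * h).SameCycle (r x) x ∨ (g * h).SameCycle (g (r x)) x :=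
    fun x => Quotient.mk_out (s := R) x
  have hrg : ∀ x, r (g x) = r x := by
    intro x
    have : Quotient.mk R (g x) = Quotient.mk R x :=
      Quotient.sound (s := R) (Or.inr (by rw [hg]))
    simp only [r, this]
  have hrc : ∀ x, r ((g * h) x) = r x := by
    intro x
    have : Quotient.mk R ((g * h) x) = Quotient.mk R x :=
      Quotient.sound (s := R) (Or.inl (Perm.sameCycle_apply_left.2 (Perm.SameCycle.refl _ _)))
    simp only [r, this]
  let S : Set X := {x | (g * h).SameCycle (r x) x}
  have hSg : ∀ x, g x ∈ S ↔ x ∉ S := by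
    intro x
    change (g * h).SameCycle (r (g x)) (g x) ↔ ¬ (g * h).SameCycle (r x) x
    rw [hrg]
    constructor
    · intro h1 h2
      exact not_sameCycle hg hg' hh hh' x (h2.symm.trans h1)
    · intro h1
      have h2 := hsc _ _ ((hr x).resolve_left h1)
      rwa [hg] at h2
  have hSc : ∀ x, (g * h) x ∈ S ↔ x ∈ S := by
    intro x
    change (g * h).SameCycle (r ((g * h) x)) ((g * h) x) ↔ (g * h).SameCycle (r x) x
    rw [hrc, Perm.sameCycle_apply_right]
  refine ⟨S, fun x => ⟨hSg x, ?_⟩⟩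
  have h1 := hSg (h x)
  have h2 := hSc x
  rw [Perm.mul_apply] at h2
  tauto

lemma two_mul_finrank_le [Fintype X] {g h : Perm X} (hg : ∀ x, g (g x) = x)
    (hg' : ∀ x, g x ≠ x) (hh : ∀ x, h (h x) = x) (hh' : ∀ x, h x ≠ x) :
    2 * finrank ℚ (Inv g ⊓ Inv h : Submodule ℚ (X → ℚ)) ≤ finrank ℚ (Inv (h * g)) := by
  classical
  obtain ⟨S, hS⟩ := exists_bipartition hg hg' hh hh'
  let ε : X → ℚ := fun x => if x ∈ S then 1 else -1
  have hεg : ∀ x, ε (g x) = -ε x := by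
    intro x
    have := (hS x).1
    by_cases hx : x ∈ S <;> simp [ε, this, hx]
  have hεh : ∀ x, ε (h x) = -ε x := by
    intro x
    have := (hS x).2
    by_cases hx : x ∈ S <;> simp [ε, this, hx]
  have hε : ∀ x, ε x ≠ 0 := by
    intro x
    by_cases hx : x ∈ S <;> simp [ε, hx]
  let φ : (Inv g ⊓ Inv h : Submodule ℚ (X → ℚ)) →ₗ[ℚ] Anti g h :=
    { toFun := fun f => ⟨fun x => ε x * f.1 x, by
        intro x
        constructor
        · simp only [hεg, f.2.1 x, neg_mul]
        · simp only [hεh, f.2.2 x, neg_mul]⟩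
      map_add' := by
        intro a b
        ext x
        simp [mul_add]
      map_smul' := by
        intro r a
        ext x
        simp [mul_left_comm] }
  have hφ : Function.Injective φ := by
    intro a b hab
    ext x
    have : ε x * a.1 x = ε x * b.1 x := congrFun (congrArg Subtype.val hab) x
    exact mul_left_cancel₀ (hε x) this
  have h1 := LinearMap.finrank_le_finrank_of_injective hφ
  have h2 := Submodule.finrank_sup_add_finrank_inf_eq (Inv g ⊓ Inv h) (Anti g h)
  have h3 : (Inv g ⊓ Inv h) ⊓ Anti g h = ⊥ := by
    rw [eq_bot_iff]
    rintro f ⟨⟨ha, -⟩, hb⟩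
    rw [Submodule.mem_bot]
    funext x
    have e1 := ha x
    have e2 := (hb x).1
    simp only [Pi.zero_apply]
    linarith
  have h4 : (Inv g ⊓ Inv h) ⊔ Anti g h ≤ Inv (h * g) := by
    refine sup_le ?_ ?_
    · rw [inf_comm]
      exact inv_inf_le_mul _ _
    · intro f hf x
      rw [Perm.mul_apply, (hf _).2, (hf _).1, neg_neg]
  have h5 := Submodule.finrank_mono h4
  rw [h3, finrank_bot] at h2
  omega

end Statement8

/-! ### Existence of the subset -/

open Statement8 in
theorem statement8 {X : Type*} [Fintype X] [DecidableEq X] (n : ℕ) (hn : 2 ≤ n)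
    (hcard : Fintype.card X = 4 * n)
    (g1 g2 g3 g4 : Equiv.Perm X)
    (h1 : g1.cycleType = Multiset.replicate (2 * n) 2)
    (h2 : g2.cycleType = Multiset.replicate (2 * n) 2)
    (h3 : g3.cycleType = Multiset.replicate 4 n)
    (h4 : g4.cycleType = {2})
    (h5 : (g1 * g2 * g3 * g4).cycleType = {2})
    (htrans : ∀ x y : X, ∃ g ∈ Subgroup.closure ({g1, g2, g3, g4} : Set (Equiv.Perm X)),
      g x = y) :
    ∃ Y : Set X, ⇑g1 '' Y = Yᶜ ∧ ⇑g2 '' Y = Yᶜ ∧ ⇑g3 '' Yᶜ = Yᶜ ∧ ⇑g4 '' Yᶜ = Yᶜ := by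
  obtain ⟨i1, f1⟩ := involution_of_cycleType (by omega) h1
  obtain ⟨i2, f2⟩ := involution_of_cycleType (by omega) h2
  have hc3 : 4 ≤ finrank ℚ (Inv g3) := by
    have := card_cycleType_le g3
    rwa [h3, Multiset.card_replicate] at this
  obtain ⟨a, b, -, hab⟩ := Perm.card_support_eq_two.1
    (show g4.support.card = 2 by rw [← Perm.sum_cycleType, h4]; simp)
  obtain ⟨p, q, -, hpq⟩ := Perm.card_support_eq_two.1
    (show (g1 * g2 * g3 * g4).support.card = 2 by rw [← Perm.sum_cycleType, h5]; simp)
  have hprod : g3 * swap a b * swap p q = g2 * g1 := by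
    have e1 : g1 * g1 = 1 := Equiv.ext i1
    have e2 : g2 * g2 = 1 := Equiv.ext i2
    have e3 : g1 * g2 * (g3 * swap a b * swap p q) = 1 := by
      rw [← hab, ← mul_assoc, ← mul_assoc, hpq, swap_mul_self]
    calc g3 * swap a b * swap p q
        = g2 * (g1 * g1) * g2 * (g3 * swap a b * swap p q) := by rw [e1, mul_one, e2, one_mul]
      _ = g2 * g1 * (g1 * g2 * (g3 * swap a b * swap p q)) := by simp only [mul_assoc]
      _ = g2 * g1 := by rw [e3, mul_one]
  set W : Submodule ℚ (X → ℚ) := Inv g3 ⊓ Inv (swap a b) ⊓ Inv (swap p q) with hWdef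
  have r1 := finrank_inv_mul_swap g3 a b (Inv g3) le_rfl
  have r2 := finrank_inv_mul_swap (g3 * swap a b) p q (Inv g3 ⊓ Inv (swap a b))
    (inv_inf_le_mul _ _)
  rw [hprod, ← hWdef] at r2
  have r3 := two_mul_finrank_le i1 f1 i2 f2
  -- Since `dim (Inv g3) ≥ 4`, the two steps give `dim (Inv (g2 * g1)) + 2 ≤ 2 * dim W`.
  have hlt : finrank ℚ (Inv g1 ⊓ Inv g2 : Submodule ℚ (X → ℚ)) < finrank ℚ W := by omega
  have hW21 : W ≤ Inv (g2 * g1) := by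
    rw [← hprod]
    exact (inf_le_inf_right _ (inv_inf_le_mul _ _)).trans (inv_inf_le_mul _ _)
  have hW : ∀ f ∈ W, ∀ x, f (g2 x) = f (g1 x) := by
    intro f hf x
    have := hW21 hf (g1 x)
    rwa [Perm.mul_apply, i1] at this
  let φ : W →ₗ[ℚ] (Inv g1 ⊓ Inv g2 : Submodule ℚ (X → ℚ)) :=
    { toFun := fun f => ⟨fun x => f.1 x + f.1 (g1 x), by
        constructor
        · intro x
          simp only [i1, add_comm]
        · intro x
          have e1 := hW f.1 f.2 x
          have e2 := hW f.1 f.2 (g2 x)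
          rw [i2] at e2
          simp only [e1, ← e2, add_comm]⟩
      map_add' := by
        intro a b
        ext x
        simp only [Submodule.coe_add, Pi.add_apply]
        ring
      map_smul' := by
        intro r a
        ext x
        simp [mul_add] }
  obtain ⟨⟨f, hf⟩, hker, hne⟩ :=
    (Submodule.ne_bot_iff _).1 (LinearMap.ker_ne_bot_of_finrank_lt (f := φ) hlt)
  have s1 : ∀ x, f (g1 x) = -f x := by
    intro x
    have : f x + f (g1 x) = 0 := congrFun (congrArg Subtype.val hker) x
    linarith
  have s2 : ∀ x, f (g2 x) = -f x := fun x => by rw [hW f hf, s1]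
  have s3 : ∀ x, f (g3 x) = f x := hf.1.1
  have s4 : ∀ x, f (g4 x) = f x := by
    rw [hab]
    exact hf.1.2
  have habs : ∀ g ∈ Subgroup.closure ({g1, g2, g3, g4} : Set (Equiv.Perm X)),
      ∀ x, |f (g x)| = |f x| := by
    intro g hg
    induction hg using Subgroup.closure_induction with
    | mem g hg =>
      intro x
      rcases hg with rfl | rfl | rfl | rfl
      · rw [s1, abs_neg]
      · rw [s2, abs_neg]
      · rw [s3]
      · rw [s4]
    | one => exact fun _ => rfl
    | mul g h _ _ ihg ihh => exact fun x => by rw [Perm.mul_apply, ihg, ihh]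
    | inv g _ ihg =>
      intro x
      have := ihg (g⁻¹ x)
      rw [← Perm.mul_apply, mul_inv_cancel] at this
      exact this.symm
  have hf0 : ∀ x, f x ≠ 0 := by
    intro x hx
    apply hne
    ext y
    obtain ⟨g, hg, rfl⟩ := htrans x y
    have := habs g hg x
    rw [hx, abs_zero, abs_eq_zero] at this
    exact this
  have img : ∀ (g : Perm X) (A B : Set X), (∀ x, g x ∈ B ↔ x ∈ A) → g '' A = B := by
    intro g A B h
    ext y
    constructor
    · rintro ⟨x, hx, rfl⟩
      exact (h x).2 hx
    · intro hy
      exact ⟨g⁻¹ y, (h _).1 (by simpa using hy), by simp⟩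
  refine ⟨{x | 0 < f x}, img _ _ _ ?_, img _ _ _ ?_, img _ _ _ ?_, img _ _ _ ?_⟩ <;> intro x
  · simp [s1, (hf0 x).symm.le_iff_lt]
  · simp [s2, (hf0 x).symm.le_iff_lt]
  · simp [s3]
  · simp [s4]
end

section
/- Let g1, g2, g3, g4 be permutations of a 24-element set X of cycle types 2^{12}, 3^8, 3^8, and 1^{22}2 respectively, such that the product g1·g2·g3·g4 has cycle type 1^{22}2 (i.e., g4 and g1·g2·g3·g4 are transpositions). If the subgroup generated by g1, g2, g3, g4 acts transitively on X, then there exists a fixed-point-free involution p of X (p∘p = id and p(x) ≠ x for all x) which commutes with each of g1, g2, g3, g4, and such that for every x ∈ X one has g4(x) ∈ {x, p(x)} and (g1·g2·g3)(x) ∈ {x, p(x)}. (Equivalently, X admits a partition into 2-element sets {x, p(x)} respected by all g_i, with g1·g2·g3 and g4 sending each 2-element set to itself.) -/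
/-!
The tuple `(g1, g2, g3, g4, (g1 g2 g3 g4)⁻¹)` has genus `0`, and `A₄` is generated by elements
`a1, a2, a3` of orders `2, 3, 3` with `a1 a2 a3 = 1`. Topologically, the degree `24` branched cover
of the sphere encoded by the tuple factors through the orbifold universal cover, of degree `12`, of
the sphere with cone points of orders `2, 3, 3`; the involution `p` is the deck transformation of
the remaining degree `2` map.

The factorisation is a map `φ : X → A₄` with `φ (gᵢ x) = aᵢ φ x` (where `a4 = 1`). To find it, let
`gᵢ` act on `X × A₄` by `(x, c) ↦ (gᵢ x, aᵢ c)`. The linear-algebraic form of the Riemann–Hurwitz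
inequality (`scott`, after Scott and Ree) bounds `2 (288 - #orbits)` by the sum of the ranks of
`g - 1` on functions, over the four generators and their product. These ranks are at most
`144, 192, 192, 12, 12` (`rank_of_pow`, `rank_of_swap`), so there are at least `12` orbits, and one
of them has at most `24` points. By transitivity on `X` it projects onto `X`, hence is the graph of
the desired `φ` (`exists_label`). All fibres of `φ` have the same size `24 / 12 = 2`, and `p`
exchanges the two points of each fibre.
-/

open Module

/-! ### Scott inequality for permutation modules -/

/-- The operator `g - 1` on rational functions on `Y`, where `g` acts by `f ↦ f ∘ g`. -/
noncomputable def permDiff {Y : Type*} (g : Equiv.Perm Y) : (Y → ℚ) →ₗ[ℚ] (Y → ℚ) :=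
  LinearMap.funLeft ℚ ℚ g - LinearMap.id

lemma permDiff_apply {Y : Type*} (g : Equiv.Perm Y) (f : Y → ℚ) (y : Y) :
    permDiff g f y = f (g y) - f y := by
  simp [permDiff, LinearMap.funLeft_apply]

/-- One step of the four permutations. The quotient `Quot (step g1 g2 g3 g4)` is the set of orbits
of the group they generate. -/
def step {Y : Type*} (g1 g2 g3 g4 : Equiv.Perm Y) (y z : Y) : Prop :=
  z = g1 y ∨ z = g2 y ∨ z = g3 y ∨ z = g4 y

lemma eq_of_step_invariant {Y Z : Type*} {g1 g2 g3 g4 : Equiv.Perm Y} (c : Y → Z)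
    (h1 : ∀ y, c (g1 y) = c y) (h2 : ∀ y, c (g2 y) = c y)
    (h3 : ∀ y, c (g3 y) = c y) (h4 : ∀ y, c (g4 y) = c y) (y : Y) :
    c y = c (Quot.mk (step g1 g2 g3 g4) y).out := by
  have key : ∀ a b, step g1 g2 g3 g4 a b → c a = c b := by
    rintro a b (rfl | rfl | rfl | rfl) <;> simp [*]
  have := congrArg (Quot.lift c key) (Quot.out_eq (Quot.mk (step g1 g2 g3 g4) y))
  exact this.symm

/-- **Scott's inequality** for the permutation module of four permutations and their product.
With `V` the space of functions and `Rᵢ` the range of `gᵢ - 1`, the complex `V → ⨁ Rᵢ → V` given by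
`f ↦ ((gᵢ - 1) f)ᵢ` and by the telescoping expansion of `g1 g2 g3 g4 - 1` has both maps of rank at
least `#Y - #orbits`. -/
lemma scott {Y : Type*} [Fintype Y] (g1 g2 g3 g4 g5 : Equiv.Perm Y) (hp : g1 * g2 * g3 * g4 = g5) :
    2 * Fintype.card Y ≤ finrank ℚ (LinearMap.range (permDiff g1))
      + finrank ℚ (LinearMap.range (permDiff g2)) + finrank ℚ (LinearMap.range (permDiff g3))
      + finrank ℚ (LinearMap.range (permDiff g4)) + finrank ℚ (LinearMap.range (permDiff g5))
      + 2 * Nat.card (Quot (step g1 g2 g3 g4)) := by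
  classical
  have : Fintype (Quot (step g1 g2 g3 g4)) := Fintype.ofFinite _
  let C := LinearMap.range (permDiff g1) × LinearMap.range (permDiff g2) ×
    LinearMap.range (permDiff g3) × LinearMap.range (permDiff g4) × LinearMap.range (permDiff g5)
  let β : (Y → ℚ) →ₗ[ℚ] C :=
    (permDiff g1).rangeRestrict.prod ((permDiff g2).rangeRestrict.prod
      ((permDiff g3).rangeRestrict.prod
        ((permDiff g4).rangeRestrict.prod (permDiff g5).rangeRestrict)))
  let T (g : Equiv.Perm Y) : (Y → ℚ) →ₗ[ℚ] (Y → ℚ) := LinearMap.funLeft ℚ ℚ g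
  let δ : C →ₗ[ℚ] (Y → ℚ) :=
    (T (g2 * g3 * g4) ∘ₗ Submodule.subtype _).coprod <|
      (T (g3 * g4) ∘ₗ Submodule.subtype _).coprod <|
      (T g4 ∘ₗ Submodule.subtype _).coprod <|
      (Submodule.subtype _).coprod (-Submodule.subtype _)
  have hδ : ∀ v : C, ∀ y, δ v y = v.1.1 (g2 (g3 (g4 y))) + (v.2.1.1 (g3 (g4 y)) +
      (v.2.2.1.1 (g4 y) + (v.2.2.2.1.1 y - v.2.2.2.2.1 y))) := by
    intro v y
    rw [sub_eq_add_neg]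
    rfl
  have hcomp : LinearMap.range β ≤ LinearMap.ker δ := by
    rintro _ ⟨f, rfl⟩
    rw [LinearMap.mem_ker]
    funext y
    rw [hδ]
    change permDiff g1 f _ + (permDiff g2 f _ + (permDiff g3 f _ +
      (permDiff g4 f _ - permDiff g5 f _))) = 0
    simp [permDiff_apply, ← hp]
  have hβ : finrank ℚ (LinearMap.ker β) ≤ Nat.card (Quot (step g1 g2 g3 g4)) := by
    rw [Nat.card_eq_fintype_card, ← finrank_fintype_fun_eq_card (R := ℚ)]
    refine LinearMap.finrank_le_finrank_of_injective (f :=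
      (LinearMap.funLeft ℚ ℚ (Quot.out : Quot (step g1 g2 g3 g4) → Y)) ∘ₗ
        (LinearMap.ker β).subtype) ?_
    rw [injective_iff_map_eq_zero]
    rintro ⟨f, hf⟩ h0
    have hf' := LinearMap.mem_ker.mp hf
    have e1 : permDiff g1 f = 0 := congrArg (fun v : C => v.1.1) hf'
    have e2 : permDiff g2 f = 0 := congrArg (fun v : C => v.2.1.1) hf'
    have e3 : permDiff g3 f = 0 := congrArg (fun v : C => v.2.2.1.1) hf'
    have e4 : permDiff g4 f = 0 := congrArg (fun v : C => v.2.2.2.1.1) hf'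
    have inv : ∀ g : Equiv.Perm Y, permDiff g f = 0 → ∀ y, f (g y) = f y := by
      intro g hg y
      have := congrFun hg y
      rw [permDiff_apply] at this
      exact sub_eq_zero.mp this
    ext y
    change f y = 0
    rw [eq_of_step_invariant f (inv _ e1) (inv _ e2) (inv _ e3) (inv _ e4) y]
    exact congrFun h0 (Quot.mk _ y)
  have hδ' : finrank ℚ (LinearMap.range δ).dualAnnihilator
      ≤ Nat.card (Quot (step g1 g2 g3 g4)) := by
    -- A functional vanishing on the range of `δ` vanishes on every `Rᵢ`.
    have ann : ∀ l ∈ (LinearMap.range δ).dualAnnihilator,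
        (∀ f, l (permDiff g1 f) = 0) ∧ (∀ f, l (permDiff g2 f) = 0) ∧
        (∀ f, l (permDiff g3 f) = 0) ∧ (∀ f, l (permDiff g4 f) = 0) := by
      intro l hl
      rw [Submodule.mem_dualAnnihilator] at hl
      have hl' : ∀ v : C, l (δ v) = 0 := fun v => hl _ ⟨v, rfl⟩
      have k4 : ∀ f, l (permDiff g4 f) = 0 := by
        intro f
        rw [← hl' (0, 0, 0, ⟨permDiff g4 f, f, rfl⟩, 0)]
        congr 1; funext y; rw [hδ]; simp
      have inv4 : ∀ f : Y → ℚ, l (T g4 f) = l f := by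
        intro f
        have := k4 f
        rw [permDiff, LinearMap.sub_apply, map_sub] at this
        exact sub_eq_zero.mp this
      have k3 : ∀ f, l (permDiff g3 f) = 0 := by
        intro f
        rw [← hl' (0, 0, ⟨permDiff g3 f, f, rfl⟩, 0, 0), ← inv4]
        congr 1; funext y; rw [hδ]; simp [T, LinearMap.funLeft_apply]
      have inv3 : ∀ f : Y → ℚ, l (T g3 f) = l f := by
        intro f
        have := k3 f
        rw [permDiff, LinearMap.sub_apply, map_sub] at this
        exact sub_eq_zero.mp this
      have k2 : ∀ f, l (permDiff g2 f) = 0 := by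
        intro f
        rw [← hl' (0, ⟨permDiff g2 f, f, rfl⟩, 0, 0, 0), ← inv3, ← inv4]
        congr 1; funext y; rw [hδ]; simp [T, LinearMap.funLeft_apply]
      have inv2 : ∀ f : Y → ℚ, l (T g2 f) = l f := by
        intro f
        have := k2 f
        rw [permDiff, LinearMap.sub_apply, map_sub] at this
        exact sub_eq_zero.mp this
      have k1 : ∀ f, l (permDiff g1 f) = 0 := by
        intro f
        rw [← hl' (⟨permDiff g1 f, f, rfl⟩, 0, 0, 0, 0), ← inv2, ← inv3, ← inv4]
        congr 1; funext y; rw [hδ]; simp [T, LinearMap.funLeft_apply]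
      exact ⟨k1, k2, k3, k4⟩
    rw [Nat.card_eq_fintype_card, ← finrank_fintype_fun_eq_card (R := ℚ)]
    let Φ : Dual ℚ (Y → ℚ) →ₗ[ℚ] (Quot (step g1 g2 g3 g4) → ℚ) :=
      LinearMap.pi fun q => LinearMap.applyₗ (Pi.single q.out (1 : ℚ))
    refine LinearMap.finrank_le_finrank_of_injective
      (f := Φ ∘ₗ (LinearMap.range δ).dualAnnihilator.subtype) ?_
    rw [injective_iff_map_eq_zero]
    rintro ⟨l, hl⟩ h0
    obtain ⟨k1, k2, k3, k4⟩ := ann l hl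
    have inv : ∀ g : Equiv.Perm Y, (∀ f, l (permDiff g f) = 0) →
        ∀ y, l (Pi.single (g y) 1) = l (Pi.single y 1) := by
      intro g hg y
      have := hg (Pi.single (g y) 1)
      have e : permDiff g (Pi.single (g y) (1 : ℚ)) = Pi.single y 1 - Pi.single (g y) 1 := by
        funext z
        rw [permDiff_apply]
        simp [Pi.single_apply]
      rw [e, map_sub] at this
      exact (sub_eq_zero.mp this).symm
    ext y
    change l (Pi.single y 1) = 0
    rw [eq_of_step_invariant (fun y => l (Pi.single y 1)) (inv _ k1) (inv _ k2) (inv _ k3)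
      (inv _ k4) y]
    exact congrFun h0 (Quot.mk _ y)
  have r1 := LinearMap.finrank_range_add_finrank_ker β
  have r2 := LinearMap.finrank_range_add_finrank_ker δ
  have r3 := Subspace.finrank_add_finrank_dualAnnihilator_eq (LinearMap.range δ)
  have r4 := Submodule.finrank_mono hcomp
  have r5 : finrank ℚ C = finrank ℚ (LinearMap.range (permDiff g1))
      + finrank ℚ (LinearMap.range (permDiff g2)) + finrank ℚ (LinearMap.range (permDiff g3))
      + finrank ℚ (LinearMap.range (permDiff g4))
      + finrank ℚ (LinearMap.range (permDiff g5)) := by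
    simp only [C, finrank_prod]; ring
  rw [finrank_fintype_fun_eq_card] at r1 r3
  omega

/-! ### Rank bounds -/

/-- The orbits of `g` have at most `m` points, so the invariant functions have dimension at least
`#Y / m`. -/
lemma rank_of_pow {Y : Type*} [Fintype Y] (g : Equiv.Perm Y) (m : ℕ) (hm : 0 < m)
    (hg : g ^ m = 1) :
    m * finrank ℚ (LinearMap.range (permDiff g)) + Fintype.card Y ≤ m * Fintype.card Y := by
  classical
  let s := Equiv.Perm.SameCycle.setoid g
  have hk : Fintype.card (Quotient s) ≤ finrank ℚ (LinearMap.ker (permDiff g)) := by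
    rw [← finrank_fintype_fun_eq_card (R := ℚ) (η := Quotient s)]
    have hmem : ∀ f : Quotient s → ℚ,
        LinearMap.funLeft ℚ ℚ (Quotient.mk s) f ∈ LinearMap.ker (permDiff g) := by
      intro f
      rw [LinearMap.mem_ker]
      funext y
      rw [permDiff_apply]
      have : Quotient.mk s (g y) = Quotient.mk s y :=
        Quotient.sound (show g.SameCycle (g y) y from (Equiv.Perm.sameCycle_apply_left).2
          (Equiv.Perm.SameCycle.refl g y))
      simp [LinearMap.funLeft_apply, this]
    refine LinearMap.finrank_le_finrank_of_injective
      (f := (LinearMap.funLeft ℚ ℚ (Quotient.mk s)).codRestrict _ hmem) ?_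
    rw [LinearMap.injective_codRestrict_iff]
    exact LinearMap.funLeft_injective_of_surjective ℚ ℚ _ Quotient.mk_surjective
  have hc : Fintype.card Y ≤ m * Fintype.card (Quotient s) := by
    refine Finset.card_le_mul_card_image_of_maps_to (s := Finset.univ) (t := Finset.univ)
      (f := Quotient.mk s) (fun _ _ => Finset.mem_univ _) m ?_
    intro q _
    induction q using Quotient.inductionOn with | h y => ?_
    have : (Finset.univ.filter fun z => Quotient.mk s z = Quotient.mk s y) ⊆
        (Finset.range m).image fun i => (g ^ i) y := by
      intro z hz
      obtain ⟨i, hi⟩ := (show g.SameCycle y z from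
        (Quotient.exact (Finset.mem_filter.mp hz).2).symm)
      have hpos : (0 : ℤ) < m := by exact_mod_cast hm
      have hmod : g ^ i = g ^ (i % m).toNat := by
        rw [← zpow_natCast, Int.toNat_of_nonneg (Int.emod_nonneg _ hpos.ne')]
        conv_lhs => rw [← Int.emod_add_mul_ediv i m, zpow_add, zpow_mul, zpow_natCast, hg]
        simp
      refine Finset.mem_image.mpr ⟨(i % m).toNat, ?_, ?_⟩
      · have := Int.emod_lt_of_pos i hpos
        have := Int.emod_nonneg i hpos.ne'
        simp only [Finset.mem_range]; omega
      · rw [← hmod, hi]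
    exact (Finset.card_le_card this).trans (Finset.card_image_le.trans (by simp))
  have r := LinearMap.finrank_range_add_finrank_ker (permDiff g)
  rw [finrank_fintype_fun_eq_card] at r
  nlinarith

/-- If `g` swaps `a` and `b`, then `f ∘ (g × 1) - f` is determined by its values on `{a} × A`. -/
lemma rank_of_swap {X A : Type*} [Fintype X] [DecidableEq X] [Fintype A] (g : Equiv.Perm X)
    (hg : g.IsSwap) :
    finrank ℚ (LinearMap.range (permDiff (Equiv.prodCongr g (1 : Equiv.Perm A))))
      ≤ Fintype.card A := by
  obtain ⟨a, b, hab, rfl⟩ := hg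
  rw [← finrank_fintype_fun_eq_card (R := ℚ) (η := A)]
  refine LinearMap.finrank_le_finrank_of_injective
    (f := LinearMap.funLeft ℚ ℚ (fun c : A => (a, c)) ∘ₗ Submodule.subtype _) ?_
  rw [injective_iff_map_eq_zero]
  rintro ⟨_, f, rfl⟩ h0
  have h0' : ∀ c, f (b, c) - f (a, c) = 0 := by
    intro c
    have := congrFun h0 c
    simpa [LinearMap.funLeft_apply, permDiff_apply] using this
  ext ⟨x, c⟩
  change permDiff _ f (x, c) = 0
  rw [permDiff_apply]
  have := h0' c
  by_cases hxa : x = a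
  · subst hxa; simpa using this
  by_cases hxb : x = b
  · subst hxb; simp; linarith
  · simp [Equiv.swap_apply_of_ne_of_ne hxa hxb]

/-! ### The group `A₄` -/

/-- `A₄` is a quotient of the triangle group of type `(2, 3, 3)`, and it is the union of the double
cosets of `⟨a2⟩` represented by `1` and `a1`. -/
lemma exists_a4_generators : ∃ a1 a2 a3 : alternatingGroup (Fin 4),
    a1 ^ 2 = 1 ∧ a2 ^ 3 = 1 ∧ a3 ^ 3 = 1 ∧ a1 * a2 * a3 = 1 ∧
      ∀ c : alternatingGroup (Fin 4), ∃ i j k : ℕ, c = a2 ^ i * a1 ^ j * a2 ^ k := by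
  have key : ∀ c : Equiv.Perm (Fin 4), Equiv.Perm.sign c = 1 → ∃ i j k : Fin 3,
      c = (c[0, 1, 2] : Equiv.Perm (Fin 4)) ^ (i : ℕ) * (c[0, 1] * c[2, 3]) ^ (j : ℕ)
        * c[0, 1, 2] ^ (k : ℕ) := by
    decide
  refine ⟨⟨c[0, 1] * c[2, 3], Equiv.Perm.mem_alternatingGroup.mpr (by decide)⟩,
    ⟨c[0, 1, 2], Equiv.Perm.mem_alternatingGroup.mpr (by decide)⟩,
    ⟨(c[0, 1] * c[2, 3] * c[0, 1, 2])⁻¹, Equiv.Perm.mem_alternatingGroup.mpr (by decide)⟩,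
    Subtype.ext (by decide),
    Subtype.ext (by decide), Subtype.ext (by decide), Subtype.ext (by decide), ?_⟩
  rintro ⟨c, hc⟩
  obtain ⟨i, j, k, h⟩ := key c hc
  exact ⟨i, j, k, Subtype.ext h⟩

lemma card_a4 : Fintype.card (alternatingGroup (Fin 4)) = 12 := by
  have := two_mul_card_alternatingGroup (α := Fin 4)
  rw [Fintype.card_perm, Fintype.card_fin] at this
  simp only [Nat.factorial] at this
  omega

/-! ### The equivariant labelling and the involution -/

/-- The equivariant labelling: the factorisation of the branched cover through the regular
`A`-cover. -/
lemma exists_label {X : Type*} [Fintype X] [DecidableEq X] {A : Type*} [Group A] [Fintype A]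
    (hcard : Fintype.card X = 24) (hA : Fintype.card A = 12)
    (g1 g2 g3 g4 : Equiv.Perm X) (a1 a2 a3 : A)
    (h1 : g1 ^ 2 = 1) (h2 : g2 ^ 3 = 1) (h3 : g3 ^ 3 = 1) (h4 : g4.IsSwap)
    (h5 : (g1 * g2 * g3 * g4).IsSwap)
    (htrans : ∀ x y : X, ∃ g ∈ Subgroup.closure ({g1, g2, g3, g4} : Set (Equiv.Perm X)), g x = y)
    (ha1 : a1 ^ 2 = 1) (ha2 : a2 ^ 3 = 1) (ha3 : a3 ^ 3 = 1) (ha : a1 * a2 * a3 = 1) :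
    ∃ φ : X → A, (∀ x, φ (g1 x) = a1 * φ x) ∧ (∀ x, φ (g2 x) = a2 * φ x) ∧
      (∀ x, φ (g3 x) = a3 * φ x) ∧ (∀ x, φ (g4 x) = φ x) := by
  classical
  let G (g : Equiv.Perm X) (a : A) : Equiv.Perm (X × A) := Equiv.prodCongr g (Equiv.mulLeft a)
  have Gmul : ∀ g g' a a', G g a * G g' a' = G (g * g') (a * a') := by
    intro g g' a a'; ext ⟨x, c⟩ <;> simp [G, mul_assoc]
  have Gone : G 1 1 = 1 := by ext ⟨x, c⟩ <;> simp [G]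
  have Gswap : ∀ g, G g 1 = Equiv.prodCongr g (1 : Equiv.Perm A) := by
    intro g; ext ⟨x, c⟩ <;> simp [G]
  have Gpow : ∀ g a (n : ℕ), G g a ^ n = G (g ^ n) (a ^ n) := by
    intro g a n
    induction n with
    | zero => simp [Gone]
    | succ n ih => rw [pow_succ, ih, Gmul, ← pow_succ, ← pow_succ]
  have hY : Fintype.card (X × A) = 288 := by rw [Fintype.card_prod, hcard, hA]
  have b1 := rank_of_pow (G g1 a1) 2 (by norm_num) (by rw [Gpow, h1, ha1, Gone])
  have b2 := rank_of_pow (G g2 a2) 3 (by norm_num) (by rw [Gpow, h2, ha2, Gone])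
  have b3 := rank_of_pow (G g3 a3) 3 (by norm_num) (by rw [Gpow, h3, ha3, Gone])
  have b4 := rank_of_swap (A := A) g4 h4
  have b5 := rank_of_swap (A := A) _ h5
  rw [← Gswap] at b4 b5
  have hs := scott (G g1 a1) (G g2 a2) (G g3 a3) (G g4 1) (G (g1 * g2 * g3 * g4) 1)
    (by simp only [Gmul, ha, mul_one])
  rw [hY] at b1 b2 b3 hs
  rw [hA] at b4 b5
  let r := step (G g1 a1) (G g2 a2) (G g3 a3) (G g4 1)
  have : Fintype (Quot r) := Fintype.ofFinite _
  have hq : 12 ≤ Fintype.card (Quot r) := by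
    rw [← Nat.card_eq_fintype_card]
    simp only [r]
    omega
  obtain ⟨q, -, hq24⟩ := Finset.exists_card_fiber_le_of_card_le_mul
    (s := (Finset.univ : Finset (X × A))) (t := (Finset.univ : Finset (Quot r)))
    (f := Quot.mk r) (n := 24) (Finset.card_pos.mp (by rw [Finset.card_univ]; omega))
    (by rw [Finset.card_univ, Finset.card_univ, hY]; omega)
  have i1 : ∀ y, Quot.mk r (G g1 a1 y) = Quot.mk r y :=
    fun y => (Quot.sound (r := r) (Or.inl rfl)).symm
  have i2 : ∀ y, Quot.mk r (G g2 a2 y) = Quot.mk r y :=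
    fun y => (Quot.sound (r := r) (Or.inr (Or.inl rfl))).symm
  have i3 : ∀ y, Quot.mk r (G g3 a3 y) = Quot.mk r y :=
    fun y => (Quot.sound (r := r) (Or.inr (Or.inr (Or.inl rfl)))).symm
  have i4 : ∀ y, Quot.mk r (G g4 1 y) = Quot.mk r y :=
    fun y => (Quot.sound (r := r) (Or.inr (Or.inr (Or.inr rfl)))).symm
  -- Every element of the group lifts to a permutation of `X × A` that preserves the orbits.
  have lift : ∀ g ∈ Subgroup.closure ({g1, g2, g3, g4} : Set (Equiv.Perm X)),
      ∃ a : A, ∀ y, Quot.mk r (G g a y) = Quot.mk r y := by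
    intro g hg
    induction hg using Subgroup.closure_induction with
    | mem g hg =>
      rcases hg with rfl | rfl | rfl | rfl
      exacts [⟨_, i1⟩, ⟨_, i2⟩, ⟨_, i3⟩, ⟨_, i4⟩]
    | one => exact ⟨1, fun y => by rw [Gone]; rfl⟩
    | mul g g' _ _ ih ih' =>
      obtain ⟨a, ha⟩ := ih
      obtain ⟨a', ha'⟩ := ih'
      exact ⟨a * a', fun y => by rw [← Gmul, Equiv.Perm.mul_apply, ha, ha']⟩
    | inv g _ ih =>
      obtain ⟨a, ha⟩ := ih
      refine ⟨a⁻¹, fun y => ?_⟩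
      rw [← ha, ← Equiv.Perm.mul_apply, Gmul, mul_inv_cancel, mul_inv_cancel, Gone]
      rfl
  have hsurj : ∀ x : X, ∃ c : A, Quot.mk r (x, c) = q := by
    intro x
    obtain ⟨⟨x0, c0⟩, h0⟩ := Quot.exists_rep q
    obtain ⟨g, hg, hgx⟩ := htrans x0 x
    obtain ⟨a, ha⟩ := lift g hg
    refine ⟨a * c0, ?_⟩
    rw [← h0, ← ha (x0, c0), ← hgx]
    rfl
  choose φ hφ using hsurj
  have huniq : ∀ x c, Quot.mk r (x, c) = q → c = φ x := by
    intro x c hc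
    have hinj : Finset.univ.image (fun x => (x, φ x)) =
        Finset.univ.filter fun y => Quot.mk r y = q := by
      refine Finset.eq_of_subset_of_card_le ?_ ?_
      · intro y hy
        obtain ⟨x, -, rfl⟩ := Finset.mem_image.mp hy
        simp [hφ]
      · rw [Finset.card_image_of_injective _ (fun x y h => congrArg Prod.fst h),
          Finset.card_univ, hcard]
        exact hq24
    have : (x, c) ∈ Finset.univ.image (fun x => (x, φ x)) := by
      rw [hinj]; simp [hc]
    obtain ⟨x', -, h⟩ := Finset.mem_image.mp this
    obtain ⟨rfl, rfl⟩ := Prod.mk.inj h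
    rfl
  refine ⟨φ, fun x => ?_, fun x => ?_, fun x => ?_, fun x => ?_⟩
  · exact (huniq _ _ ((i1 (x, φ x)).trans (hφ x))).symm
  · exact (huniq _ _ ((i2 (x, φ x)).trans (hφ x))).symm
  · exact (huniq _ _ ((i3 (x, φ x)).trans (hφ x))).symm
  · have := huniq _ _ ((i4 (x, φ x)).trans (hφ x))
    rw [← this]
    simp

theorem statement9 {X : Type*} [Fintype X] [DecidableEq X]
    (hcard : Fintype.card X = 24)
    (g1 g2 g3 g4 : Equiv.Perm X)
    (h1 : g1.cycleType = Multiset.replicate 12 2)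
    (h2 : g2.cycleType = Multiset.replicate 8 3)
    (h3 : g3.cycleType = Multiset.replicate 8 3)
    (h4 : g4.cycleType = {2})
    (h5 : (g1 * g2 * g3 * g4).cycleType = {2})
    (htrans : ∀ x y : X, ∃ g ∈ Subgroup.closure ({g1, g2, g3, g4} : Set (Equiv.Perm X)),
      g x = y) :
    ∃ p : Equiv.Perm X, p * p = 1 ∧ (∀ x, p x ≠ x) ∧
      p * g1 = g1 * p ∧ p * g2 = g2 * p ∧ p * g3 = g3 * p ∧ p * g4 = g4 * p ∧
      (∀ x, g4 x = x ∨ g4 x = p x) ∧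
      (∀ x, (g1 * g2 * g3) x = x ∨ (g1 * g2 * g3) x = p x) := by
  obtain ⟨a1, a2, a3, ha1, ha2, ha3, ha, hgen⟩ := exists_a4_generators
  have pow_of : ∀ (g : Equiv.Perm X) (n m : ℕ), g.cycleType = Multiset.replicate n m →
      g ^ m = 1 := by
    intro g n m h
    rw [← orderOf_dvd_iff_pow_eq_one, ← Equiv.Perm.lcm_cycleType, h, Multiset.lcm_dvd]
    intro b hb
    rw [Multiset.eq_of_mem_replicate hb]
  have swap_of : ∀ g : Equiv.Perm X, g.cycleType = {2} → g.IsSwap := by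
    intro g h
    rw [← Equiv.Perm.card_support_eq_two, ← Equiv.Perm.sum_cycleType, h]
    rfl
  obtain ⟨φ, e1, e2, e3, e4⟩ := exists_label hcard card_a4 g1 g2 g3 g4 a1 a2 a3
    (pow_of _ _ _ h1) (pow_of _ _ _ h2) (pow_of _ _ _ h3) (swap_of _ h4) (swap_of _ h5) htrans
    ha1 ha2 ha3 ha
  let F (c : alternatingGroup (Fin 4)) : Finset X := Finset.univ.filter fun x => φ x = c
  have shift : ∀ (g : Equiv.Perm X) a, (∀ x, φ (g x) = a * φ x) →
      ∀ c, (F (a * c)).card = (F c).card := by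
    intro g a hg c
    symm
    refine Finset.card_equiv g ?_
    intro x
    simp [F, hg]
  have shift_pow : ∀ (g : Equiv.Perm X) a, (∀ x, φ (g x) = a * φ x) →
      ∀ (n : ℕ) c, (F (a ^ n * c)).card = (F c).card := by
    intro g a hg n
    induction n with
    | zero => simp
    | succ n ih => intro c; rw [pow_succ', mul_assoc, shift g a hg, ih]
  have const : ∀ c, (F c).card = (F 1).card := by
    intro c
    obtain ⟨i, j, k, rfl⟩ := hgen c
    rw [mul_assoc, shift_pow g2 a2 e2, shift_pow g1 a1 e1, ← mul_one (a2 ^ k),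
      shift_pow g2 a2 e2]
  have two : ∀ c, (F c).card = 2 := by
    have := Finset.card_eq_sum_card_fiberwise (s := (Finset.univ : Finset X))
      (t := (Finset.univ : Finset (alternatingGroup (Fin 4)))) (f := φ)
      (fun _ _ => Finset.mem_coe.mpr (Finset.mem_univ _))
    change _ = ∑ c, (F c).card at this
    simp only [const, Finset.sum_const, Finset.card_univ, hcard, card_a4, smul_eq_mul] at this
    intro c
    rw [const]
    omega
  have partner : ∀ x, ∃ y, y ≠ x ∧ φ y = φ x ∧ ∀ z, φ z = φ x → z = x ∨ z = y := by
    intro x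
    obtain ⟨u, v, huv, hF⟩ := Finset.card_eq_two.mp (two (φ x))
    have mem : ∀ z, φ z = φ x ↔ z = u ∨ z = v := by
      intro z
      have : z ∈ F (φ x) ↔ z ∈ ({u, v} : Finset X) := by rw [hF]
      simpa [F] using this
    rcases (mem x).mp rfl with h | h
    · exact ⟨v, by rw [h]; exact huv.symm, (mem v).mpr (Or.inr rfl),
        fun z hz => by rw [h]; exact (mem z).mp hz⟩
    · exact ⟨u, by rw [h]; exact huv, (mem u).mpr (Or.inl rfl),
        fun z hz => by rw [h]; exact ((mem z).mp hz).symm⟩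
  choose p hne hφ hp using partner
  have hinv : Function.Involutive p := fun x =>
    ((hp (p x) x (hφ x).symm).resolve_left (hne x).symm).symm
  have comm : ∀ (g : Equiv.Perm X) a, (∀ x, φ (g x) = a * φ x) →
      hinv.toPerm * g = g * hinv.toPerm := by
    intro g a hg
    ext x
    change p (g x) = g (p x)
    exact ((hp (g x) (g (p x)) (by rw [hg, hg, hφ])).resolve_left
      (fun h => hne x (g.injective h))).symm
  refine ⟨hinv.toPerm, Equiv.ext hinv, hne, comm _ _ e1, comm _ _ e2, comm _ _ e3,
    comm _ 1 (fun x => by rw [e4, one_mul]), fun x => hp _ _ (e4 x), fun x => hp _ _ ?_⟩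
  change φ (g1 (g2 (g3 x))) = φ x
  rw [e1, e2, e3, ← mul_assoc, ← mul_assoc, ha, one_mul]
end

section
/- Let g1, g2, g3, g4 be permutations of a 48-element set X of cycle types 2^{24}, 3^{16}, 4^{12}, and 1^{46}2 respectively, such that the product g1·g2·g3·g4 has cycle type 1^{46}2 (i.e., g4 and g1·g2·g3·g4 are transpositions). If the subgroup generated by g1, g2, g3, g4 acts transitively on X, then there exists a fixed-point-free involution p of X (p∘p = id and p(x) ≠ x for all x) which commutes with each of g1, g2, g3, g4, and such that for every x ∈ X one has g4(x) ∈ {x, p(x)} and (g1·g2·g3)(x) ∈ {x, p(x)}. (Equivalently, X admits a partition into 2-element sets {x, p(x)} respected by all g_i, with g1·g2·g3 and g4 sending each 2-element set to itself.) -/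
/-!
The triple `(g1, g2, g3)` has the orders `(2, 3, 4)` of a triple `(s₁, s₂, s₃)` of generators of the
octahedral group `S₄` with `s₁ s₂ s₃ = 1`. Put `h = (g1 g2 g3 g4)⁻¹`, a transposition, and let the
five permutations `(g1, s₁)`, `(g2, s₂)`, `(g3, s₃)`, `(g4, 1)`, `(h, 1)`, whose product is `1`, act
on `X × S₄` (with `S₄` acting on itself by left multiplication). This is the monodromy of the
pullback of the given covering of the sphere along the octahedral covering.

For permutations of a finite set `Y` with product `1`, the Riemann–Hurwitz (Ree) inequality says
that the indices of the permutations add up to at least `2 (|Y| - #orbits)`. It is proved here by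
Scott's linear algebra argument (`two_mul_card_le`): the index of `a` is at least the rank of
`φ ↦ φ - φ ∘ a` on `Y → ℚ`, and `φ ↦ (φ - φ ∘ aᵢ)ᵢ` followed by a telescoping sum is zero.
Here `|Y| = 48 · 24 = 1152` and the indices are at most `576, 768, 864, 24, 24`, so there are at
least `24` orbits on `X × S₄`. Since the `gᵢ` act transitively on `X`, every orbit meets every
fibre `{x} × S₄`, which has `24` elements; hence it meets each fibre exactly once. A single orbit is
therefore the graph of a map `f : X → S₄` with `f (gᵢ x) = sᵢ f x` for `i ≤ 3` and `f (g4 x) = f x`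
(`exists_octahedral_map`).

As the `sᵢ` generate `S₄`, all fibres of `f` have the same size `48 / 24 = 2`. The involution `p`
swaps the two points of each fibre. It commutes with every permutation that maps fibres to fibres,
and `g4` and `g1 g2 g3` preserve each fibre.
-/

open Equiv Module

namespace OctahedralCover

/-! ### The Riemann–Hurwitz inequality by linear algebra -/

lemma apply_inv {Z : Type*} (g : Perm Z) (z : Z) : g (g⁻¹ z) = z := g.apply_symm_apply z

variable {Y : Type*} [Fintype Y]

/-- The operator `φ ↦ φ - φ ∘ a` on functions, i.e. `1 - a` for the permutation representation. -/
noncomputable def diffMap (a : Perm Y) : (Y → ℚ) →ₗ[ℚ] (Y → ℚ) :=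
  LinearMap.id - LinearMap.funLeft ℚ ℚ a

omit [Fintype Y] in
lemma diffMap_apply (a : Perm Y) (φ : Y → ℚ) (y : Y) : diffMap a φ y = φ y - φ (a y) := rfl

/-- The functions invariant under every permutation of the tuple `a`. -/
def invariants (a : Fin 5 → Perm Y) : Submodule ℚ (Y → ℚ) where
  carrier := {φ | ∀ i y, φ (a i y) = φ y}
  add_mem' := by
    intro φ ψ hφ hψ i y
    simp [hφ i y, hψ i y]
  zero_mem' := by
    intro i y
    rfl
  smul_mem' := by
    intro c φ hφ i y
    simp [hφ i y]

/-- An invariant function is determined by its values on representatives of the orbits. -/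
lemma finrank_invariants_le (a : Fin 5 → Perm Y) :
    finrank ℚ (invariants a) ≤
      Nat.card (MulAction.orbitRel.Quotient (Subgroup.closure (Set.range a)) Y) := by
  classical
  set H := Subgroup.closure (Set.range a) with hH
  have : Fintype (MulAction.orbitRel.Quotient H Y) := Fintype.ofFinite _
  let F : invariants a →ₗ[ℚ] (MulAction.orbitRel.Quotient H Y → ℚ) :=
    (LinearMap.funLeft ℚ ℚ (fun q : MulAction.orbitRel.Quotient H Y => Quotient.out q)).comp
      (invariants a).subtype
  have hinv : ∀ φ ∈ invariants a, ∀ g ∈ H, ∀ y, φ (g y) = φ y := by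
    intro φ hφ g hg
    induction hg using Subgroup.closure_induction with
    | mem x hx =>
      obtain ⟨i, rfl⟩ := hx
      exact hφ i
    | one => intro y; rfl
    | mul x y _ _ hx hy =>
      intro z
      rw [Perm.mul_apply, hx, hy]
    | inv x _ hx =>
      intro z
      rw [← hx (x⁻¹ z), apply_inv]
  have hF : Function.Injective F := by
    rw [← LinearMap.ker_eq_bot, LinearMap.ker_eq_bot']
    rintro ⟨φ, hφ⟩ h
    ext y
    have h1 : φ (Quotient.out (Quotient.mk (MulAction.orbitRel H Y) y)) = 0 := congrFun h _
    have h2 : (MulAction.orbitRel H Y) (Quotient.out (Quotient.mk (MulAction.orbitRel H Y) y)) y :=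
      Quotient.mk_out y
    obtain ⟨g, hg⟩ := MulAction.orbitRel_apply.1 h2
    rw [← hg] at h1
    have h3 := hinv φ hφ g g.2 y
    exact h3.symm.trans h1
  have := LinearMap.finrank_le_finrank_of_injective hF
  rwa [Module.finrank_fintype_fun_eq_card, ← Nat.card_eq_fintype_card] at this

/-- The telescoping map from the product of the ranges of the operators `1 - aᵢ`: composed with
`φ ↦ (φ - φ ∘ aᵢ)ᵢ` it is `φ ↦ φ - φ ∘ (a₀ a₁ a₂ a₃ a₄)`. -/
noncomputable def telescope (a : Fin 5 → Perm Y) :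
    ((i : Fin 5) → LinearMap.range (diffMap (a i))) →ₗ[ℚ] (Y → ℚ) where
  toFun w y := (w 4).1 y + (w 3).1 (a 4 y) + (w 2).1 (a 3 (a 4 y)) +
    (w 1).1 (a 2 (a 3 (a 4 y))) + (w 0).1 (a 1 (a 2 (a 3 (a 4 y))))
  map_add' := by
    intro v w
    ext y
    simp
    ring
  map_smul' := by
    intro c w
    ext y
    simp
    ring

omit [Fintype Y] in
/-- A functional killing `telescope a` is invariant under each `aᵢ`; the invariance is obtained
successively for `a₄, a₃, …, a₀`, since the `i`-th summand of `telescope a` is composed with the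
permutations of larger index. -/
lemma functional_invariant (a : Fin 5 → Perm Y) (l : Dual ℚ (Y → ℚ))
    (hl : ∀ w, l (telescope a w) = 0) (i : Fin 5) (ψ : Y → ℚ) : l (ψ ∘ a i) = l ψ := by
  classical
  let W (i : Fin 5) (ψ : Y → ℚ) : (i : Fin 5) → LinearMap.range (diffMap (a i)) :=
    Pi.single i ⟨diffMap (a i) ψ, LinearMap.mem_range_self _ _⟩
  have h4 : ∀ ψ : Y → ℚ, l (ψ ∘ a 4) = l ψ := by
    intro ψ
    have h : telescope a (W 4 ψ) = ψ - ψ ∘ a 4 := by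
      ext y
      simp [telescope, W, diffMap_apply]
    have := hl (W 4 ψ)
    rw [h, map_sub] at this
    linarith
  have h3 : ∀ ψ : Y → ℚ, l (ψ ∘ a 3) = l ψ := by
    intro ψ
    have h : telescope a (W 3 ψ) = (ψ - ψ ∘ a 3) ∘ a 4 := by
      ext y
      simp [telescope, W, diffMap_apply]
    have := hl (W 3 ψ)
    rw [h, h4, map_sub] at this
    linarith
  have h2 : ∀ ψ : Y → ℚ, l (ψ ∘ a 2) = l ψ := by
    intro ψ
    have h : telescope a (W 2 ψ) = ((ψ - ψ ∘ a 2) ∘ a 3) ∘ a 4 := by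
      ext y
      simp [telescope, W, diffMap_apply]
    have := hl (W 2 ψ)
    rw [h, h4, h3, map_sub] at this
    linarith
  have h1 : ∀ ψ : Y → ℚ, l (ψ ∘ a 1) = l ψ := by
    intro ψ
    have h : telescope a (W 1 ψ) = (((ψ - ψ ∘ a 1) ∘ a 2) ∘ a 3) ∘ a 4 := by
      ext y
      simp [telescope, W, diffMap_apply]
    have := hl (W 1 ψ)
    rw [h, h4, h3, h2, map_sub] at this
    linarith
  have h0 : ∀ ψ : Y → ℚ, l (ψ ∘ a 0) = l ψ := by
    intro ψ
    have h : telescope a (W 0 ψ) = ((((ψ - ψ ∘ a 0) ∘ a 1) ∘ a 2) ∘ a 3) ∘ a 4 := by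
      ext y
      simp [telescope, W, diffMap_apply]
    have := hl (W 0 ψ)
    rw [h, h4, h3, h2, h1, map_sub] at this
    linarith
  fin_cases i
  exacts [h0 ψ, h1 ψ, h2 ψ, h3 ψ, h4 ψ]

/-- An invariant functional corresponds to an invariant function through its values on the delta
functions. -/
lemma finrank_dualAnnihilator_le (a : Fin 5 → Perm Y) :
    finrank ℚ (LinearMap.range (telescope a)).dualAnnihilator ≤ finrank ℚ (invariants a) := by
  classical
  let F : Dual ℚ (Y → ℚ) →ₗ[ℚ] (Y → ℚ) :=
    { toFun := fun l y => l (Pi.single y 1)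
      map_add' := by intros; rfl
      map_smul' := by intros; rfl }
  have hF : Function.Injective F := by
    intro l m h
    apply LinearMap.pi_ext'
    intro y
    ext
    exact congrFun h y
  have hmem : ∀ l ∈ (LinearMap.range (telescope a)).dualAnnihilator, F l ∈ invariants a := by
    intro l hl i y
    rw [Submodule.mem_dualAnnihilator] at hl
    have h := functional_invariant a l (fun w => hl _ (LinearMap.mem_range_self _ w)) i
      (Pi.single (a i y) 1)
    have h2 : (Pi.single (a i y) 1 : Y → ℚ) ∘ a i = Pi.single y 1 := by
      ext z
      simp [Pi.single_apply]
    rw [h2] at h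
    exact h.symm
  have hG : Function.Injective (F.restrict hmem) := by
    intro l m h
    exact Subtype.ext (hF (congrArg Subtype.val h))
  exact LinearMap.finrank_le_finrank_of_injective hG

/-- The Riemann–Hurwitz (Ree) inequality for five permutations with product `1`, with ranks of
`1 - aᵢ` in place of indices. -/
lemma two_mul_card_le (a : Fin 5 → Perm Y) (ha : a 0 * a 1 * a 2 * a 3 * a 4 = 1) :
    2 * Fintype.card Y ≤ ∑ i, finrank ℚ (LinearMap.range (diffMap (a i))) +
      2 * Nat.card (MulAction.orbitRel.Quotient (Subgroup.closure (Set.range a)) Y) := by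
  classical
  let D : (Y → ℚ) →ₗ[ℚ] ((i : Fin 5) → LinearMap.range (diffMap (a i))) :=
    LinearMap.pi fun i => (diffMap (a i)).rangeRestrict
  have hD : LinearMap.ker D ≤ invariants a := by
    intro φ hφ i y
    have h : D φ = 0 := hφ
    have h1 : diffMap (a i) φ = 0 := congrArg Subtype.val (congrFun h i)
    have h2 := congrFun h1 y
    rw [diffMap_apply] at h2
    simp only [Pi.zero_apply] at h2
    linarith
  have hDE : LinearMap.range D ≤ LinearMap.ker (telescope a) := by
    rintro _ ⟨φ, rfl⟩
    rw [LinearMap.mem_ker]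
    ext y
    have h : a 0 (a 1 (a 2 (a 3 (a 4 y)))) = y := Perm.congr_fun ha y
    simp [telescope, D, diffMap_apply, h]
  have e1 := LinearMap.finrank_range_add_finrank_ker D
  have e2 := LinearMap.finrank_range_add_finrank_ker (telescope a)
  have e3 := Subspace.finrank_add_finrank_dualAnnihilator_eq (LinearMap.range (telescope a))
  have e4 := finrank_dualAnnihilator_le a
  have e5 := finrank_invariants_le a
  have e6 := Submodule.finrank_mono hD
  have e7 := Submodule.finrank_mono hDE
  rw [Module.finrank_fintype_fun_eq_card] at e1 e3
  rw [Module.finrank_pi_fintype] at e2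
  omega

/-! ### Bounds for the indices -/

/-- If `a ^ r = 1`, then the cycles of `a` have length at most `r`, so `a` has at least `|Y| / r`
cycles, and the indicator functions of the cycles are fixed by `a`. -/
lemma card_le_mul_finrank_ker (a : Perm Y) (r : ℕ) (hr : 0 < r) (ha : a ^ r = 1) :
    Fintype.card Y ≤ r * finrank ℚ (LinearMap.ker (diffMap a)) := by
  classical
  let Q := Quotient (Perm.SameCycle.setoid a)
  have : Fintype Q := Fintype.ofFinite _
  let F : (Q → ℚ) →ₗ[ℚ] (Y → ℚ) :=
    LinearMap.funLeft ℚ ℚ (Quotient.mk (Perm.SameCycle.setoid a))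
  have hF : Function.Injective F :=
    LinearMap.funLeft_injective_of_surjective _ _ _ Quotient.mk_surjective
  have hmem : ∀ φ, F φ ∈ LinearMap.ker (diffMap a) := by
    intro φ
    rw [LinearMap.mem_ker]
    ext y
    rw [diffMap_apply]
    have h : (Quotient.mk (Perm.SameCycle.setoid a) (a y)) =
        Quotient.mk (Perm.SameCycle.setoid a) y :=
      Quotient.sound (Perm.sameCycle_apply_left.2 (Perm.SameCycle.refl a y))
    simp [F, LinearMap.funLeft_apply, h]
  have h1 : Fintype.card Q ≤ finrank ℚ (LinearMap.ker (diffMap a)) := by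
    have := LinearMap.finrank_le_finrank_of_injective
      (f := F.codRestrict (LinearMap.ker (diffMap a)) hmem)
      (fun x y h => hF (congrArg Subtype.val h))
    rwa [Module.finrank_fintype_fun_eq_card] at this
  have h2 : Fintype.card Y ≤ r * Fintype.card Q := by
    have := Finset.card_le_mul_card_image_of_maps_to
      (f := Quotient.mk (Perm.SameCycle.setoid a)) (s := Finset.univ) (t := Finset.univ)
      (fun x _ => Finset.mem_univ _) r (by
        intro q _
        obtain ⟨y, rfl⟩ := Quotient.mk_surjective q
        have hsub : (Finset.univ.filter fun x => Quotient.mk (Perm.SameCycle.setoid a) x =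
            Quotient.mk (Perm.SameCycle.setoid a) y) ⊆
            (Finset.range r).image fun j => (a ^ j) y := by
          intro x hx
          have hx' : Perm.SameCycle a x y := Quotient.exact (Finset.mem_filter.1 hx).2
          obtain ⟨j, hj⟩ := hx'.symm
          have hr' : (0 : ℤ) < r := by exact_mod_cast hr
          have hlt := Int.emod_lt_of_pos j hr'
          have hnn := Int.emod_nonneg j hr'.ne'
          refine Finset.mem_image.2 ⟨(j % r).toNat, Finset.mem_range.2 (by omega), ?_⟩
          rw [← hj, ← zpow_natCast, Int.toNat_of_nonneg hnn]
          have : a ^ j = a ^ (j % r) := by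
            conv_lhs => rw [← Int.mul_ediv_add_emod j r]
            rw [zpow_add, zpow_mul, zpow_natCast, ha, one_zpow, one_mul]
          rw [this]
        exact (Finset.card_le_card hsub).trans (Finset.card_image_le.trans (by simp)))
    simpa using this
  exact h2.trans (Nat.mul_le_mul_left r h1)

/-- A transposition of `X`, extended trivially to `X × S`, is a product of `|S|` transpositions, so
`1 -` it has rank at most `|S|`. -/
lemma finrank_range_swap_le {X S : Type*} [DecidableEq X] [Fintype X] [Fintype S]
    (t : Perm X) (ht : t.IsSwap) :
    finrank ℚ (LinearMap.range (diffMap (Equiv.prodCongr t (1 : Perm S)))) ≤ Fintype.card S := by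
  obtain ⟨u, v, huv, rfl⟩ := ht
  let L : (S → ℚ) →ₗ[ℚ] (X × S → ℚ) :=
    { toFun := fun ψ y => if y.1 = u then ψ y.2 else if y.1 = v then -ψ y.2 else 0
      map_add' := by
        intro φ ψ
        ext y
        simp only [Pi.add_apply]
        split_ifs <;> ring
      map_smul' := by
        intro c ψ
        ext y
        simp only [Pi.smul_apply, smul_eq_mul, RingHom.id_apply]
        split_ifs <;> ring }
  have h : LinearMap.range (diffMap (Equiv.prodCongr (swap u v) (1 : Perm S))) ≤
      LinearMap.range L := by
    rintro _ ⟨φ, rfl⟩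
    refine ⟨fun s => φ (u, s) - φ (v, s), ?_⟩
    ext ⟨x, s⟩
    rw [diffMap_apply]
    change (if x = u then φ (u, s) - φ (v, s) else
      if x = v then -(φ (u, s) - φ (v, s)) else 0) = φ (x, s) - φ (swap u v x, s)
    by_cases hu : x = u
    · subst hu
      simp
    · by_cases hv : x = v
      · subst hv
        simp [hu]
      · simp [hu, hv, swap_apply_of_ne_of_ne hu hv]
  have h2 := (Submodule.finrank_mono h).trans (LinearMap.finrank_range_le L)
  rwa [Module.finrank_fintype_fun_eq_card] at h2

/-! ### The octahedral group -/

/-- The octahedral group of order `24`, as the symmetric group on four letters. -/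
abbrev Oct := Perm (Fin 4)

/-- The generator of order `2` of the octahedral group. -/
def s₁ : Oct := swap 0 1

/-- The generator of order `4` of the octahedral group. -/
def s₃ : Oct := finRotate 4

/-- The generator of order `3` of the octahedral group, determined by `s₁ * s₂ * s₃ = 1`. -/
def s₂ : Oct := s₁⁻¹ * s₃⁻¹

lemma s₁_pow : s₁ ^ 2 = 1 := by decide

lemma s₂_pow : s₂ ^ 3 = 1 := by decide

lemma s₃_pow : s₃ ^ 4 = 1 := by decide

lemma s_prod : s₁ * s₂ * s₃ = 1 := by simp [s₂]

lemma closure_s : Subgroup.closure ({s₃, s₁} : Set Oct) = ⊤ := by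
  have := Perm.closure_cycle_adjacent_swap (isCycle_finRotate (n := 2)) support_finRotate 0
  exact this

lemma card_oct : Fintype.card Oct = 24 := by
  simp [Oct, Fintype.card_perm, Nat.factorial]

/-! ### The map to the octahedral group and its fibres -/

variable {X : Type*} [Fintype X] [DecidableEq X]

omit [Fintype X] [DecidableEq X] in
lemma prodCongr_pow_eq_one {S : Type*} [Group S] (g : Perm X) (s : S) (r : ℕ) (hg : g ^ r = 1)
    (hs : s ^ r = 1) : (Equiv.prodCongr g (Equiv.mulLeft s)) ^ r = 1 := by
  have h : ∀ n : ℕ, ∀ y : X × S, ((Equiv.prodCongr g (Equiv.mulLeft s)) ^ n) y =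
      ((g ^ n) y.1, s ^ n * y.2) := by
    intro n
    induction n with
    | zero => intro y; simp
    | succ n ih =>
      intro y
      rw [pow_succ, Perm.mul_apply, ih]
      simp [pow_succ, mul_assoc]
  ext1 y
  rw [h, hg, hs]
  simp

/-- The map to the octahedral group whose graph is an orbit on `X × Oct`. -/
lemma exists_octahedral_map (hcard : Fintype.card X = 48) (g1 g2 g3 g4 : Perm X)
    (h1 : g1 ^ 2 = 1) (h2 : g2 ^ 3 = 1) (h3 : g3 ^ 4 = 1) (h4 : g4.IsSwap)
    (h5 : (g1 * g2 * g3 * g4).IsSwap)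
    (htrans : ∀ x y : X, ∃ g ∈ Subgroup.closure ({g1, g2, g3, g4} : Set (Perm X)), g x = y) :
    ∃ f : X → Oct, (∀ x, f (g1 x) = s₁ * f x) ∧ (∀ x, f (g2 x) = s₂ * f x) ∧
      (∀ x, f (g3 x) = s₃ * f x) ∧ (∀ x, f (g4 x) = f x) := by
  classical
  have hinv : (g1 * g2 * g3 * g4)⁻¹.IsSwap := by
    obtain ⟨u, v, huv, h⟩ := h5
    exact ⟨u, v, huv, by rw [h, swap_inv]⟩
  let a : Fin 5 → Perm (X × Oct) :=
    ![Equiv.prodCongr g1 (Equiv.mulLeft s₁), Equiv.prodCongr g2 (Equiv.mulLeft s₂),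
      Equiv.prodCongr g3 (Equiv.mulLeft s₃), Equiv.prodCongr g4 1,
      Equiv.prodCongr (g1 * g2 * g3 * g4)⁻¹ 1]
  set H := Subgroup.closure (Set.range a) with hH
  have hmem : ∀ i, a i ∈ H := fun i => Subgroup.subset_closure ⟨i, rfl⟩
  have ha : a 0 * a 1 * a 2 * a 3 * a 4 = 1 := by
    ext1 ⟨x, s⟩
    change ((g1 * g2 * g3 * g4) ((g1 * g2 * g3 * g4)⁻¹ x), s₁ * (s₂ * (s₃ * s))) = (x, s)
    rw [apply_inv, ← mul_assoc, ← mul_assoc, s_prod, one_mul]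
  have hcY : Fintype.card (X × Oct) = 1152 := by
    rw [Fintype.card_prod, hcard, card_oct]
  have rk : ∀ b : Perm (X × Oct), ∀ r, 0 < r → b ^ r = 1 →
      r * finrank ℚ (LinearMap.range (diffMap b)) ≤ (r - 1) * 1152 := by
    intro b r hr hb
    have e1 := card_le_mul_finrank_ker b r hr hb
    have e2 := LinearMap.finrank_range_add_finrank_ker (diffMap b)
    rw [Module.finrank_fintype_fun_eq_card, hcY] at e2
    rw [hcY] at e1
    rw [Nat.sub_mul, one_mul, ← e2, Nat.mul_add, e2]
    omega
  have r0 := rk (a 0) 2 (by norm_num) (prodCongr_pow_eq_one g1 s₁ 2 h1 s₁_pow)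
  have r1 := rk (a 1) 3 (by norm_num) (prodCongr_pow_eq_one g2 s₂ 3 h2 s₂_pow)
  have r2 := rk (a 2) 4 (by norm_num) (prodCongr_pow_eq_one g3 s₃ 4 h3 s₃_pow)
  have r3 : finrank ℚ (LinearMap.range (diffMap (a 3))) ≤ Fintype.card Oct :=
    finrank_range_swap_le g4 h4
  have r4 : finrank ℚ (LinearMap.range (diffMap (a 4))) ≤ Fintype.card Oct :=
    finrank_range_swap_le _ hinv
  have key := two_mul_card_le a ha
  rw [Fin.sum_univ_five, hcY, ← hH] at key
  rw [card_oct] at r3 r4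
  have hQ : 24 ≤ Nat.card (MulAction.orbitRel.Quotient H (X × Oct)) := by omega
  -- Each element of the group generated by the `gᵢ` lifts to `H`, so every `H`-orbit meets every
  -- fibre over `X`.
  have hlift : ∀ g ∈ Subgroup.closure ({g1, g2, g3, g4} : Set (Perm X)),
      ∃ k ∈ H, ∀ y, (k y).1 = g y.1 := by
    intro g hg
    induction hg using Subgroup.closure_induction with
    | mem x hx =>
      simp only [Set.mem_insert_iff, Set.mem_singleton_iff] at hx
      rcases hx with rfl | rfl | rfl | rfl
      exacts [⟨a 0, hmem 0, fun _ => rfl⟩, ⟨a 1, hmem 1, fun _ => rfl⟩,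
        ⟨a 2, hmem 2, fun _ => rfl⟩, ⟨a 3, hmem 3, fun _ => rfl⟩]
    | one => exact ⟨1, H.one_mem, fun _ => rfl⟩
    | mul x y _ _ hx hy =>
      obtain ⟨k, hk, hk'⟩ := hx
      obtain ⟨m, hm, hm'⟩ := hy
      exact ⟨k * m, H.mul_mem hk hm, fun y => by rw [Perm.mul_apply, hk', hm']; rfl⟩
    | inv x _ hx =>
      obtain ⟨k, hk, hk'⟩ := hx
      refine ⟨k⁻¹, H.inv_mem hk, fun y => ?_⟩
      have h := hk' (k⁻¹ y)
      rw [apply_inv] at h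
      rw [h]
      exact (x.symm_apply_apply _).symm
  let ι : X → Oct → MulAction.orbitRel.Quotient H (X × Oct) := fun x s =>
    Quotient.mk (MulAction.orbitRel H (X × Oct)) (x, s)
  have hι : ∀ k ∈ H, ∀ y : X × Oct, ι (k y).1 (k y).2 = ι y.1 y.2 := by
    intro k hk y
    exact Quotient.sound (MulAction.orbitRel_apply.2 ⟨⟨k, hk⟩, rfl⟩)
  have hsurj : ∀ x, Function.Surjective (ι x) := by
    intro x q
    obtain ⟨⟨z, s⟩, rfl⟩ := Quotient.mk_surjective q
    obtain ⟨g, hg, hgz⟩ := htrans z x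
    obtain ⟨k, hk, hk'⟩ := hlift g hg
    refine ⟨(k (z, s)).2, ?_⟩
    have h := hι k hk (z, s)
    rw [hk'] at h
    simp only [hgz] at h
    exact h
  have hbij : ∀ x, Function.Bijective (ι x) := by
    intro x
    refine (Nat.bijective_iff_surjective_and_card _).2 ⟨hsurj x, le_antisymm ?_ ?_⟩
    · rw [Nat.card_eq_fintype_card, card_oct]
      exact hQ
    · exact Nat.card_le_card_of_surjective _ (hsurj x)
  obtain ⟨x₀⟩ : Nonempty X := Fintype.card_pos_iff.1 (by omega)
  choose f hf using fun x => hsurj x (ι x₀ 1)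
  refine ⟨f, fun x => ?_, fun x => ?_, fun x => ?_, fun x => ?_⟩
  · exact (hbij (g1 x)).1 ((hf _).trans ((hι (a 0) (hmem 0) (x, f x)).trans (hf x)).symm)
  · exact (hbij (g2 x)).1 ((hf _).trans ((hι (a 1) (hmem 1) (x, f x)).trans (hf x)).symm)
  · exact (hbij (g3 x)).1 ((hf _).trans ((hι (a 2) (hmem 2) (x, f x)).trans (hf x)).symm)
  · exact (hbij (g4 x)).1 ((hf _).trans ((hι (a 3) (hmem 3) (x, f x)).trans (hf x)).symm)

omit [DecidableEq X] in
/-- The fibres of an equivariant map from a set of `48` elements to the octahedral group are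
pairs: their sizes agree because the set of left translations preserving the sizes is a subgroup
that contains generators. -/
lemma card_fiber (hcard : Fintype.card X = 48) (g1 g3 : Perm X) (f : X → Oct)
    (f1 : ∀ x, f (g1 x) = s₁ * f x) (f3 : ∀ x, f (g3 x) = s₃ * f x) (σ : Oct) :
    (Finset.univ.filter fun x => f x = σ).card = 2 := by
  let N : Oct → ℕ := fun σ => (Finset.univ.filter fun x => f x = σ).card
  have step : ∀ (g : Perm X) (s : Oct), (∀ x, f (g x) = s * f x) → ∀ σ, N (s * σ) = N σ := by
    intro g s h σ
    refine (Finset.card_equiv g ?_).symm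
    intro x
    simp [h]
  have hall : ∀ τ ∈ Subgroup.closure ({s₃, s₁} : Set Oct), ∀ σ, N (τ * σ) = N σ := by
    intro τ hτ
    induction hτ using Subgroup.closure_induction with
    | mem x hx =>
      simp only [Set.mem_insert_iff, Set.mem_singleton_iff] at hx
      rcases hx with rfl | rfl
      exacts [step g3 _ f3, step g1 _ f1]
    | one => intro σ; rw [one_mul]
    | mul x y _ _ hx hy =>
      intro σ
      rw [mul_assoc, hx, hy]
    | inv x _ hx =>
      intro σ
      rw [← hx (x⁻¹ * σ), mul_inv_cancel_left]
  have hconst : ∀ τ, N τ = N σ := by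
    intro τ
    have := hall (τ * σ⁻¹) (by rw [closure_s]; trivial) σ
    rwa [inv_mul_cancel_right] at this
  have hsum : Fintype.card X = ∑ τ : Oct, N τ :=
    Finset.card_eq_sum_card_fiberwise fun x _ => Finset.mem_coe.2 (Finset.mem_univ (f x))
  rw [Finset.sum_congr rfl fun τ _ => hconst τ, Finset.sum_const, Finset.card_univ, card_oct,
    hcard, smul_eq_mul] at hsum
  change N σ = 2
  omega

end OctahedralCover

open OctahedralCover in
theorem statement10 {X : Type*} [Fintype X] [DecidableEq X]
    (hcard : Fintype.card X = 48)
    (g1 g2 g3 g4 : Equiv.Perm X)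
    (h1 : g1.cycleType = Multiset.replicate 24 2)
    (h2 : g2.cycleType = Multiset.replicate 16 3)
    (h3 : g3.cycleType = Multiset.replicate 12 4)
    (h4 : g4.cycleType = {2})
    (h5 : (g1 * g2 * g3 * g4).cycleType = {2})
    (htrans : ∀ x y : X, ∃ g ∈ Subgroup.closure ({g1, g2, g3, g4} : Set (Equiv.Perm X)),
      g x = y) :
    ∃ p : Equiv.Perm X, p * p = 1 ∧ (∀ x, p x ≠ x) ∧
      p * g1 = g1 * p ∧ p * g2 = g2 * p ∧ p * g3 = g3 * p ∧ p * g4 = g4 * p ∧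
      (∀ x, g4 x = x ∨ g4 x = p x) ∧
      (∀ x, (g1 * g2 * g3) x = x ∨ (g1 * g2 * g3) x = p x) := by
  have hpow : ∀ (g : Perm X) (n r : ℕ), g.cycleType = Multiset.replicate n r → g ^ r = 1 := by
    intro g n r h
    rw [← orderOf_dvd_iff_pow_eq_one, ← Perm.lcm_cycleType, h, Multiset.lcm_dvd]
    intro b hb
    rw [Multiset.eq_of_mem_replicate hb]
  obtain ⟨f, f1, f2, f3, f4⟩ := exists_octahedral_map hcard g1 g2 g3 g4 (hpow _ _ _ h1)
    (hpow _ _ _ h2) (hpow _ _ _ h3) (Perm.isSwap_iff_cycleType.2 h4)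
    (Perm.isSwap_iff_cycleType.2 h5) htrans
  have hq : ∀ x, ∃ y, y ≠ x ∧ f y = f x ∧ ∀ z, f z = f x → z = x ∨ z = y := by
    intro x
    obtain ⟨u, v, huv, h⟩ := Finset.card_eq_two.1 (card_fiber hcard g1 g3 f f1 f3 (f x))
    have hm : ∀ z, f z = f x ↔ z = u ∨ z = v := by
      intro z
      have := Finset.ext_iff.1 h z
      simpa using this
    rcases (hm x).1 rfl with rfl | rfl
    · exact ⟨v, huv.symm, (hm v).2 (Or.inr rfl), fun z hz => (hm z).1 hz⟩
    · exact ⟨u, huv, (hm u).2 (Or.inl rfl), fun z hz => ((hm z).1 hz).symm⟩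
  choose q hne hfq hor using hq
  have hqq : Function.Involutive q := by
    intro x
    rcases hor x (q (q x)) ((hfq _).trans (hfq x)) with h | h
    · exact h
    · exact absurd h (hne _)
  -- A permutation compatible with the fibres of `f` commutes with the fibre swap.
  have comm : ∀ (g : Perm X) (s : Oct), (∀ x, f (g x) = s * f x) →
      hqq.toPerm * g = g * hqq.toPerm := by
    intro g s hg
    ext1 x
    change q (g x) = g (q x)
    rcases hor (g x) (g (q x)) (by rw [hg, hg, hfq]) with h | h
    · exact absurd (g.injective h) (hne x)
    · exact h.symm
  refine ⟨hqq.toPerm, ?_, hne, comm g1 _ f1, comm g2 _ f2, comm g3 _ f3,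
    comm g4 1 (by simpa using f4), fun x => hor x _ (f4 x), fun x => hor x _ ?_⟩
  · ext1 x
    exact hqq x
  · rw [Perm.mul_apply, Perm.mul_apply, f1, f2, f3, ← mul_assoc, ← mul_assoc, s_prod, one_mul]
end

section
/- Let g1, g2, g3, g4 be permutations of a 120-element set X of cycle types 2^{60}, 3^{40}, 5^{24}, and 1^{118}2 respectively, such that the product g1·g2·g3·g4 has cycle type 1^{118}2 (i.e., g4 and g1·g2·g3·g4 are transpositions). If the subgroup generated by g1, g2, g3, g4 acts transitively on X, then there exists a fixed-point-free involution p of X (p∘p = id and p(x) ≠ x for all x) which commutes with each of g1, g2, g3, g4, and such that for every x ∈ X one has g4(x) ∈ {x, p(x)} and (g1·g2·g3)(x) ∈ {x, p(x)}. (Equivalently, X admits a partition into 2-element sets {x, p(x)} respected by all g_i, with g1·g2·g3 and g4 sending each 2-element set to itself.) -/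
/-!
The given data describe a branched cover of the sphere by a sphere (the indices sum to
`60 + 80 + 96 + 1 + 1 = 2 * 120 - 2`), and it factors through the icosahedral cover with group
`A₅`, leaving a map of degree two whose deck transformation is the required involution.

Choose `γ₁, γ₂, γ₃` generating `A₅` with `γ₁ ^ 2 = γ₂ ^ 3 = γ₃ ^ 5 = γ₁ * γ₂ * γ₃ = 1`, put
`γ₄ = 1`, and let the four generators act on `X × A₅` by `aᵢ (x, γ) = (gᵢ x, γᵢ * γ)`. Let `C` be an
orbit. It covers `X` with all fibres of one size `d`, and no cycle of `g₁`, `g₂`, `g₃`, `g₄` or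
`g₁ * g₂ * g₃ * g₄` gets longer in `C`, so the indices on `C` sum to at most
`d * (2 * 120 - 2)`. The Riemann-Hurwitz (Ree) inequality for the transitive action on `C` bounds
this sum below by `2 * (120 * d) - 2`; hence `d = 1` and `C` is the graph of a map `φ : X → A₅` with
`φ (gᵢ x) = γᵢ * φ x` (`exists_lift`). All fibres of `φ` have `120 / 60 = 2` points, and
`p` exchanges the two points of each fibre. It commutes with every `gᵢ` since these permute the
fibres, while `g₄` and `g₁ * g₂ * g₃` preserve each fibre because `γ₄ = γ₁ * γ₂ * γ₃ = 1`.

Ree's inequality (`ree`) is derived from linear algebra on the permutation module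
(`scott_ineq`, after L. Scott), where the index of a permutation `a` is the rank of `1 - a`.
-/

/-! ### Ree's inequality -/

open Module in
/-- The linear algebra behind Scott's lemma: by the relation `∑ Tᵢ cᵢ = 0`, the image of
`v ↦ (Tᵢ (cᵢ v))ᵢ` in `∏ range Tᵢ` lies in the kernel of the summation map onto `∑ range Tᵢ`. -/
theorem scott_ineq {k : ℕ} {V : Type*} [AddCommGroup V] [Module ℚ V] [FiniteDimensional ℚ V]
    (T c : Fin k → (V →ₗ[ℚ] V)) (hTc : ∑ i, T i ∘ₗ c i = 0) :
    finrank ℚ V + finrank ℚ (⨆ i, LinearMap.range (T i) : Submodule ℚ V) ≤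
      (∑ i, finrank ℚ (LinearMap.range (T i))) +
        finrank ℚ (⨅ i, LinearMap.ker (T i ∘ₗ c i) : Submodule ℚ V) := by
  let B : V →ₗ[ℚ] (∀ i, LinearMap.range (T i)) :=
    LinearMap.pi fun i => (T i).rangeRestrict ∘ₗ c i
  let D : (∀ i, LinearMap.range (T i)) →ₗ[ℚ] V :=
    ∑ i, (LinearMap.range (T i)).subtype ∘ₗ LinearMap.proj i
  have hkerB : LinearMap.ker B = ⨅ i, LinearMap.ker (T i ∘ₗ c i) := by
    ext v
    simp [B, funext_iff, Subtype.ext_iff]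
  have hrangeD : (⨆ i, LinearMap.range (T i)) ≤ LinearMap.range D := by
    refine iSup_le fun i w hw => ⟨Pi.single i ⟨w, hw⟩, ?_⟩
    simp only [D, LinearMap.sum_apply, LinearMap.comp_apply, LinearMap.proj_apply,
      Submodule.subtype_apply]
    rw [Finset.sum_eq_single i]
    · simp
    · intro j _ hj
      simp [hj]
    · simp
  have hDB : LinearMap.range B ≤ LinearMap.ker D := by
    rintro _ ⟨v, rfl⟩
    have := LinearMap.congr_fun hTc v
    simpa [B, D] using this
  have e1 := LinearMap.finrank_range_add_finrank_ker B
  have e2 := LinearMap.finrank_range_add_finrank_ker D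
  have e3 := Submodule.finrank_mono hDB
  have e4 := Submodule.finrank_mono hrangeD
  rw [hkerB] at e1
  rw [finrank_pi_fintype] at e2
  omega

/-- The operator `1 - a` on rational functions on `Y`, where `a` acts by `v ↦ v ∘ a`. -/
noncomputable def defect {Y : Type*} (a : Equiv.Perm Y) : (Y → ℚ) →ₗ[ℚ] (Y → ℚ) :=
  LinearMap.id - LinearMap.funLeft ℚ ℚ a

theorem defect_apply {Y : Type*} (a : Equiv.Perm Y) (v : Y → ℚ) (y : Y) :
    defect a v y = v y - v (a y) := rfl

/-- The index of a permutation, encoded as the rank of `1 - a` on the permutation module; for finite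
`Y` this is the number of points minus the number of cycles (fixed points included). -/
noncomputable def index {Y : Type*} (a : Equiv.Perm Y) : ℕ :=
  Module.finrank ℚ (LinearMap.range (defect a))

/-- If `a ^ r = 1`, then `a` has at least `|Y| / r` cycles, so its index is at most
`|Y| * (r - 1) / r`. -/
theorem index_of_pow {Y : Type*} [Fintype Y] (a : Equiv.Perm Y) (r : ℕ) (hr : 0 < r)
    (ha : a ^ r = 1) : r * index a + Fintype.card Y ≤ r * Fintype.card Y := by
  classical
  let Q := Quotient (Equiv.Perm.SameCycle.setoid a)
  have hcard : Fintype.card Y ≤ r * Fintype.card Q := by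
    have hsurj : Function.Surjective (fun z : Fin r × Q => (a ^ (z.1 : ℕ)) z.2.out) := by
      intro y
      obtain ⟨i, hi⟩ : a.SameCycle (Quotient.mk (Equiv.Perm.SameCycle.setoid a) y).out y :=
        Quotient.mk_out (s := Equiv.Perm.SameCycle.setoid a) y
      have hr' : (r : ℤ) ≠ 0 := by exact_mod_cast hr.ne'
      have hlt := Int.emod_lt_of_pos i (by exact_mod_cast hr : (0 : ℤ) < r)
      have hnn := Int.emod_nonneg i hr'
      refine ⟨(⟨(i % r).toNat, by omega⟩, Quotient.mk _ y), ?_⟩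
      have hpow : a ^ (i % r).toNat = a ^ i := by
        rw [← zpow_natCast, Int.toNat_of_nonneg hnn]
        conv_rhs => rw [← Int.mul_ediv_add_emod i r, zpow_add, zpow_mul]
        simp [ha]
      simp only [hpow, hi]
    simpa using Fintype.card_le_of_surjective _ hsurj
  have hker : Fintype.card Q ≤ Module.finrank ℚ (LinearMap.ker (defect a)) := by
    have hinj : Function.Injective
        (LinearMap.funLeft ℚ ℚ (Quotient.mk (Equiv.Perm.SameCycle.setoid a))) :=
      LinearMap.funLeft_injective_of_surjective _ _ _ Quotient.mk_surjective
    have h1 := LinearMap.finrank_range_of_inj hinj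
    rw [Module.finrank_fintype_fun_eq_card] at h1
    rw [← h1]
    refine Submodule.finrank_mono ?_
    rintro _ ⟨f, rfl⟩
    rw [LinearMap.mem_ker]
    ext y
    have : (Quotient.mk (Equiv.Perm.SameCycle.setoid a) (a y)) = Quotient.mk _ y :=
      Quotient.sound (Equiv.Perm.sameCycle_apply_left.2 (Equiv.Perm.SameCycle.refl a y))
    simp [defect_apply, LinearMap.funLeft_apply, this]
  have hrn := LinearMap.finrank_range_add_finrank_ker (defect a)
  rw [Module.finrank_fintype_fun_eq_card] at hrn
  change index a + _ = _ at hrn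
  nlinarith [Nat.mul_le_mul_left r hker]

/-- If `a` is an involution each of whose 2-cycles meets `P`, its index is at most `|P|`: a function
in the range of `1 - a` is odd under `a`, hence determined by its values on `P`. -/
theorem index_le_card {Y : Type*} [Fintype Y] (a : Equiv.Perm Y) (P : Finset Y)
    (ha : ∀ y, a (a y) = y) (hP : ∀ y, y ∉ P → a y ∉ P → a y = y) : index a ≤ P.card := by
  let L : LinearMap.range (defect a) →ₗ[ℚ] (P → ℚ) :=
    LinearMap.funLeft ℚ ℚ (Subtype.val : P → Y) ∘ₗ Submodule.subtype _
  have hL : Function.Injective L := by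
    rw [← LinearMap.ker_eq_bot, LinearMap.ker_eq_bot']
    rintro ⟨_, v, rfl⟩ hw
    have h0 : ∀ y ∈ P, v y - v (a y) = 0 := fun y hy => congrFun hw ⟨y, hy⟩
    ext y
    change v y - v (a y) = 0
    by_cases hy : y ∈ P
    · exact h0 y hy
    by_cases hay : a y ∈ P
    · have := h0 _ hay
      rw [ha] at this
      linarith
    · rw [hP y hy hay, sub_self]
  have := LinearMap.finrank_le_finrank_of_injective hL
  rwa [Module.finrank_fintype_fun_eq_card, Fintype.card_coe] at this

open Module in
/-- Ree's inequality: permutations `a₁, …, a₄` generating a transitive group satisfy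
`∑ index aᵢ + index (a₁ * a₂ * a₃ * a₄) ≥ 2 * (|Y| - 1)`. Transitivity is phrased as: a nonempty
set mapped into itself by all `aᵢ` contains every point. -/
theorem ree {Y : Type*} [Fintype Y] (a₁ a₂ a₃ a₄ : Equiv.Perm Y) (y₀ : Y)
    (hconn : ∀ S : Set Y, S.Nonempty →
      (∀ y ∈ S, a₁ y ∈ S ∧ a₂ y ∈ S ∧ a₃ y ∈ S ∧ a₄ y ∈ S) → ∀ y, y ∈ S) :
    2 * Fintype.card Y ≤
      index a₁ + index a₂ + index a₃ + index a₄ + index (a₁ * a₂ * a₃ * a₄) + 2 := by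
  classical
  let A : Equiv.Perm Y → ((Y → ℚ) →ₗ[ℚ] (Y → ℚ)) := fun a => LinearMap.funLeft ℚ ℚ a
  let a : Fin 5 → Equiv.Perm Y := ![a₁, a₂, a₃, a₄, a₁ * a₂ * a₃ * a₄]
  let T : Fin 5 → ((Y → ℚ) →ₗ[ℚ] (Y → ℚ)) := fun i => defect (a i)
  let c : Fin 5 → ((Y → ℚ) →ₗ[ℚ] (Y → ℚ)) :=
    ![LinearMap.id, A a₁, A (a₁ * a₂), A (a₁ * a₂ * a₃), -LinearMap.id]
  have hTc : ∑ i, T i ∘ₗ c i = 0 := by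
    ext v y
    simp [Fin.sum_univ_five, T, c, a, A, defect_apply, LinearMap.funLeft_apply]
  have key := scott_ineq T c hTc
  -- A common kernel vector is invariant under every `aᵢ`, hence constant.
  have hker : finrank ℚ (⨅ i, LinearMap.ker (T i ∘ₗ c i) : Submodule ℚ (Y → ℚ)) ≤ 1 := by
    have hle : (⨅ i, LinearMap.ker (T i ∘ₗ c i) : Submodule ℚ (Y → ℚ)) ≤
        Submodule.span ℚ {fun _ => (1 : ℚ)} := by
      intro v hv
      rw [Submodule.mem_iInf] at hv
      have hv' : ∀ i y, T i (c i v) y = 0 := fun i y => congrFun (hv i) y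
      have k1 : ∀ y, v (a₁ y) = v y := fun y => (sub_eq_zero.1 (hv' 0 y)).symm
      have k2 : ∀ y, v (a₂ y) = v y := fun y => by
        have : v (a₁ y) = v (a₁ (a₂ y)) := sub_eq_zero.1 (hv' 1 y)
        simpa [k1] using this.symm
      have k3 : ∀ y, v (a₃ y) = v y := fun y => by
        have : v (a₁ (a₂ y)) = v (a₁ (a₂ (a₃ y))) := sub_eq_zero.1 (hv' 2 y)
        simpa [k1, k2] using this.symm
      have k4 : ∀ y, v (a₄ y) = v y := fun y => by
        have : v (a₁ (a₂ (a₃ y))) = v (a₁ (a₂ (a₃ (a₄ y)))) := sub_eq_zero.1 (hv' 3 y)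
        simpa [k1, k2, k3] using this.symm
      have hc := hconn {y | v y = v y₀} ⟨y₀, rfl⟩ (fun y hy => by
        simp only [Set.mem_ofPred_eq, k1, k2, k3, k4] at hy ⊢
        exact ⟨hy, hy, hy, hy⟩)
      rw [Submodule.mem_span_singleton]
      refine ⟨v y₀, ?_⟩
      ext y
      simpa using (hc y).symm
    exact (Submodule.finrank_mono hle).trans
      ((finrank_span_le_card _).trans (by simp))
  -- Modulo the ranges of the `1 - aᵢ` all basis vectors agree, so the sum of the ranges has
  -- codimension at most one.
  have hrange : Fintype.card Y ≤
      finrank ℚ (⨆ i, LinearMap.range (T i) : Submodule ℚ (Y → ℚ)) + 1 := by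
    set R : Submodule ℚ (Y → ℚ) := ⨆ i, LinearMap.range (T i) with hR
    set E : Submodule ℚ (Y → ℚ) := Submodule.span ℚ {Pi.single y₀ (1 : ℚ)} with hE
    have step : ∀ i y, (Pi.single y (1 : ℚ) : Y → ℚ) ∈ R ⊔ E →
        (Pi.single (a i y) (1 : ℚ) : Y → ℚ) ∈ R ⊔ E := by
      intro i y hy
      have hmem : T i (Pi.single (a i y) 1) ∈ R ⊔ E :=
        Submodule.mem_sup_left (Submodule.mem_iSup_of_mem i ⟨_, rfl⟩)
      have heq : T i (Pi.single (a i y) 1) = Pi.single (a i y) 1 - Pi.single y 1 := by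
        ext z
        simp [T, defect_apply, Pi.single_apply]
      rw [heq] at hmem
      simpa using add_mem hmem hy
    have hall := hconn {y | (Pi.single y (1 : ℚ) : Y → ℚ) ∈ R ⊔ E}
      ⟨y₀, Submodule.mem_sup_right (Submodule.mem_span_singleton_self _)⟩
      (fun y hy => ⟨step 0 y hy, step 1 y hy, step 2 y hy, step 3 y hy⟩)
    have htop : R ⊔ E = ⊤ := by
      rw [eq_top_iff, ← (Pi.basisFun ℚ Y).span_eq, Submodule.span_le]
      rintro _ ⟨y, rfl⟩
      simpa using hall y
    have h1 := Submodule.finrank_add_le_finrank_add_finrank R E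
    rw [htop, finrank_top, finrank_fintype_fun_eq_card] at h1
    have h2 : finrank ℚ E ≤ 1 := (finrank_span_le_card _).trans (by simp)
    omega
  rw [finrank_fintype_fun_eq_card, Fin.sum_univ_five] at key
  change _ ≤ index a₁ + index a₂ + index a₃ + index a₄ + index (a₁ * a₂ * a₃ * a₄) + _ at key
  omega
/-! ### Transitive families and their fibres -/

/-- A family of self-maps is irreducible if the only nonempty subset it maps into itself is the
whole set. For permutations of a finite set, this is transitivity of the group they generate. -/
def Irred {ι B : Type*} (g : ι → B → B) : Prop :=
  ∀ T : Set B, T.Nonempty → (∀ i, ∀ t ∈ T, g i t ∈ T) → ∀ b, b ∈ T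

open scoped Pointwise in
theorem smul_mem_of_closure {G α : Type*} [Group G] [MulAction G α] [Finite α] {S : Set G}
    {T : Set α} (hST : ∀ g ∈ S, ∀ t ∈ T, g • t ∈ T) {g : G} (hg : g ∈ Subgroup.closure S)
    {t : α} (ht : t ∈ T) : g • t ∈ T := by
  have hle : Subgroup.closure S ≤ MulAction.stabilizer G T := by
    rw [Subgroup.closure_le]
    intro g hg
    rw [SetLike.mem_coe, MulAction.mem_stabilizer_set_iff_smul_set_subset T.toFinite]
    rintro _ ⟨t, ht, rfl⟩
    exact hST g hg t ht
  have h := hle hg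
  rw [MulAction.mem_stabilizer_iff] at h
  rw [← h]
  exact Set.smul_mem_smul_set ht

/-- If `f` intertwines injections `aᵢ` with an irreducible family `gᵢ`, its fibres all have
the same size: fibre sizes cannot decrease along any `gᵢ`, so all of them reach the maximum. -/
theorem fiber_card_const {ι C B : Type*} [Fintype C] [Nonempty B] [Finite B] [DecidableEq B]
    (f : C → B) (a : ι → C → C) (ha : ∀ i, Function.Injective (a i)) (g : ι → B → B)
    (hf : ∀ i c, f (a i c) = g i (f c)) (hg : Irred g) :
    ∃ d, ∀ b, (Finset.univ.filter fun c => f c = b).card = d := by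
  classical
  let n : B → ℕ := fun b => (Finset.univ.filter fun c => f c = b).card
  have hmono : ∀ i b, n b ≤ n (g i b) := fun i b =>
    Finset.card_le_card_of_injOn (a i)
      (fun c hc => by
        simp only [Finset.coe_filter, Finset.mem_univ, true_and, Set.mem_ofPred_eq] at hc ⊢
        rw [hf, hc])
      ((ha i).injOn)
  obtain ⟨m, hm⟩ := Finite.exists_max n
  refine ⟨n m, fun b => le_antisymm (hm b) ?_⟩
  exact hg {b | n m ≤ n b} ⟨m, le_refl (n m)⟩ (fun i t ht => le_trans ht (hmono i t)) b

theorem card_eq_mul_of_fiber {C B : Type*} [Fintype C] [Fintype B] [DecidableEq B] (f : C → B)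
    {d : ℕ} (hd : ∀ b, (Finset.univ.filter fun c => f c = b).card = d) :
    Fintype.card C = Fintype.card B * d := by
  classical
  rw [← Finset.card_univ,
    Finset.card_eq_sum_card_fiberwise (f := f) (t := Finset.univ) (fun _ _ => by simp)]
  simp [hd]

/-- Permutations of a nonempty finite set restrict to permutations `bᵢ` of some nonempty subset
`C` on which they are irreducible, namely a minimal nonempty invariant subset. -/
theorem exists_irred_subset {ι Y : Type*} [Finite Y] [Nonempty Y] (a : ι → Equiv.Perm Y) :
    ∃ (C : Set Y) (b : ι → Equiv.Perm C), C.Nonempty ∧ (∀ i c, (b i c : Y) = a i c) ∧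
      Irred (fun i => (b i : C → C)) := by
  classical
  obtain ⟨C, ⟨hne, hcl⟩, hmin⟩ := exists_minimal_of_wellFoundedLT
    (fun C : Set Y => C.Nonempty ∧ ∀ i, ∀ y ∈ C, a i y ∈ C) ⟨Set.univ, Set.univ_nonempty, by simp⟩
  have := Fintype.ofFinite C
  refine ⟨C, fun i => Equiv.ofBijective (fun c => ⟨a i c, hcl i c c.2⟩)
    (Finite.injective_iff_bijective.1 fun c c' h =>
      Subtype.ext ((a i).injective (congrArg Subtype.val h))), hne, fun _ _ => rfl, ?_⟩
  intro T hT hclT c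
  have hsub : Subtype.val '' T ⊆ C := by rintro _ ⟨t, _, rfl⟩; exact t.2
  have := hmin (y := Subtype.val '' T) ⟨hT.image _, by
    rintro i _ ⟨t, ht, rfl⟩
    exact ⟨_, hclT i t ht, rfl⟩⟩ hsub c.2
  obtain ⟨t, ht, h⟩ := this
  rwa [← Subtype.ext h]

/-! ### The equivariant map to the icosahedral group -/

/-- The genus-zero permutations `gᵢ` have an equivariant map to any finite group with elements
satisfying the `(2, 3, 5)` triangle relations. It is the map whose graph is an orbit of the diagonal
action on `X × Γ`, which Ree's inequality forces to project bijectively onto `X`. -/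
theorem exists_lift {X Γ : Type*} [Fintype X] [DecidableEq X] [Group Γ] [Finite Γ]
    (hcard : Fintype.card X = 120) (g₁ g₂ g₃ g₄ : Equiv.Perm X)
    (h1 : g₁ ^ 2 = 1) (h2 : g₂ ^ 3 = 1) (h3 : g₃ ^ 5 = 1)
    (h4 : g₄.IsSwap) (h5 : (g₁ * g₂ * g₃ * g₄).IsSwap)
    (hirr : Irred (fun i => (![g₁, g₂, g₃, g₄] i : X → X)))
    (γ₁ γ₂ γ₃ : Γ) (e1 : γ₁ ^ 2 = 1) (e2 : γ₂ ^ 3 = 1) (e3 : γ₃ ^ 5 = 1)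
    (e : γ₁ * γ₂ * γ₃ = 1) :
    ∃ φ : X → Γ, ∀ i x, φ (![g₁, g₂, g₃, g₄] i x) = ![γ₁, γ₂, γ₃, 1] i * φ x := by
  classical
  have : Nonempty X := Fintype.card_pos_iff.1 (by omega)
  let g := ![g₁, g₂, g₃, g₄]
  let γ := ![γ₁, γ₂, γ₃, 1]
  obtain ⟨C, b, ⟨c₀, hc₀⟩, hb, hC⟩ := exists_irred_subset
    fun i => Equiv.prodCongr (g i) (Equiv.mulLeft (γ i))
  have := Fintype.ofFinite C
  replace hb : ∀ i c, (b i c : X × Γ) = (g i (c : X × Γ).1, γ i * (c : X × Γ).2) := hb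
  let f : C → X := fun c => (c : X × Γ).1
  obtain ⟨d, hd⟩ := fiber_card_const f (fun i => (b i : C → C)) (fun i => (b i).injective)
    (fun i => (g i : X → X)) (fun i c => by simp [f, hb]) hirr
  have hN := card_eq_mul_of_fiber f hd
  rw [hcard] at hN
  have hpow : ∀ i k, g i ^ k = 1 → γ i ^ k = 1 → b i ^ k = 1 := by
    intro i k hg hγ
    have : ∀ k c, ((b i ^ k) c : X × Γ) = ((g i ^ k) (c : X × Γ).1, γ i ^ k * (c : X × Γ).2) := by
      intro k c
      induction k with
      | zero => simp
      | succ k ih => simp [pow_succ', hb, ih, mul_assoc]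
    ext1 c
    apply Subtype.ext
    rw [this, hg, hγ]
    simp
  -- A transposition acting trivially on the second factor swaps two fibres of size `d`.
  have hswap : ∀ (β : Equiv.Perm C) (s : Equiv.Perm X), s.IsSwap →
      (∀ c, (β c : X × Γ) = (s (c : X × Γ).1, (c : X × Γ).2)) → index β ≤ d := by
    rintro β _ ⟨p, q, _, rfl⟩ hβ
    rw [← hd p]
    refine index_le_card β _ (fun c => Subtype.ext ?_) (fun c hc hc' => Subtype.ext ?_)
    · simp [hβ]
    · simp only [Finset.mem_filter, Finset.mem_univ, true_and, f, hβ] at hc hc'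
      rw [hβ, Equiv.swap_apply_of_ne_of_ne hc]
      rintro h
      exact hc' (by rw [h, Equiv.swap_apply_right])
  have i1 := index_of_pow (b 0) 2 (by norm_num) (hpow 0 2 h1 e1)
  have i2 := index_of_pow (b 1) 3 (by norm_num) (hpow 1 3 h2 e2)
  have i3 := index_of_pow (b 2) 5 (by norm_num) (hpow 2 5 h3 e3)
  have i4 := hswap (b 3) g₄ h4 (fun c => by simp [hb, g, γ])
  have i5 := hswap (b 0 * b 1 * b 2 * b 3) _ h5 (fun c => by
    simp only [Equiv.Perm.mul_apply, hb]
    simp [g, γ, ← mul_assoc, e])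
  have hree := ree (b 0) (b 1) (b 2) (b 3) ⟨c₀, hc₀⟩ (fun S hS hcl => hC S hS (by
    intro i t ht
    obtain ⟨k0, k1, k2, k3⟩ := hcl t ht
    fin_cases i <;> assumption))
  -- The bounds give `2 * 120 * d ≤ (60 + 80 + 96 + 1 + 1) * d + 2`.
  have hd1 : d ≤ 1 := by omega
  have hinj : Function.Injective f := by
    intro c c' h
    have := hd (f c')
    exact Finset.card_le_one.1 (this.trans_le hd1) c (by simp [h]) c' (by simp)
  have hsurj : ∀ x, ∃ c, f c = x :=
    hirr {x | ∃ c, f c = x} ⟨_, ⟨c₀, hc₀⟩, rfl⟩ (by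
      rintro i _ ⟨c, rfl⟩
      exact ⟨b i c, by simp [f, hb, g]⟩)
  choose l hl using hsurj
  refine ⟨fun x => (l x : X × Γ).2, fun i x => ?_⟩
  have : l (g i x) = b i (l x) := hinj (by
    rw [hl]
    change g i x = (b i (l x) : X × Γ).1
    rw [hb]
    exact congrArg _ (hl x).symm)
  change (l (g i x) : X × Γ).2 = _
  rw [this, hb]

/-- `A₅` is a quotient of the `(2, 3, 5)` triangle group. Elements of orders 2, 3 and 5 generate a
subgroup of order divisible by 30; index two is excluded by simplicity. -/
theorem exists_generators : ∃ γ₁ γ₂ γ₃ : alternatingGroup (Fin 5),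
    γ₁ ^ 2 = 1 ∧ γ₂ ^ 3 = 1 ∧ γ₃ ^ 5 = 1 ∧ γ₁ * γ₂ * γ₃ = 1 ∧
      Subgroup.closure {γ₁, γ₂, γ₃} = ⊤ := by
  let γ₁ : alternatingGroup (Fin 5) := ⟨Equiv.swap 0 1 * Equiv.swap 2 3, by
    rw [Equiv.Perm.mem_alternatingGroup]; decide⟩
  let γ₂ : alternatingGroup (Fin 5) := ⟨Equiv.swap 0 2 * Equiv.swap 2 4, by
    rw [Equiv.Perm.mem_alternatingGroup]; decide⟩
  let γ₃ : alternatingGroup (Fin 5) := (γ₁ * γ₂)⁻¹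
  have e1 : γ₁ ^ 2 = 1 := by decide
  have e2 : γ₂ ^ 3 = 1 := by decide
  have e3 : γ₃ ^ 5 = 1 := by
    apply Subtype.ext
    set_option maxRecDepth 10000 in decide
  refine ⟨γ₁, γ₂, γ₃, e1, e2, e3, mul_inv_cancel _, ?_⟩
  set H := Subgroup.closure {γ₁, γ₂, γ₃} with hH
  have hcard : Nat.card (alternatingGroup (Fin 5)) = 60 := by
    rw [nat_card_alternatingGroup]; simp [Nat.factorial]
  have hdvd : ∀ (p : ℕ) (γ : alternatingGroup (Fin 5)), p.Prime → γ ∈ H → γ ^ p = 1 → γ ≠ 1 →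
      p ∣ Nat.card H := by
    intro p γ hp hγ h1 h2
    have := Fact.mk hp
    have hord := orderOf_dvd_natCard (⟨γ, hγ⟩ : H)
    rwa [← Subgroup.orderOf_coe, orderOf_eq_prime h1 h2] at hord
  have d2 := hdvd 2 γ₁ (by norm_num) (Subgroup.subset_closure (by simp)) e1 (by decide)
  have d3 := hdvd 3 γ₂ (by norm_num) (Subgroup.subset_closure (by simp)) e2 (by decide)
  have d5 := hdvd 5 γ₃ (by norm_num) (Subgroup.subset_closure (by simp)) e3 (by decide)
  have hmul := H.card_mul_index
  rw [hcard] at hmul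
  obtain ⟨m, hm⟩ : 30 ∣ Nat.card H := by omega
  have hidx : H.index = 1 ∨ H.index = 2 := by
    have hi : m * H.index = 2 := by rw [hm] at hmul; nlinarith
    have := (Nat.dvd_prime Nat.prime_two).1 (Dvd.intro_left _ hi)
    exact this
  rcases hidx with h | h
  · exact Subgroup.index_eq_one.1 h
  · exact (Subgroup.normal_of_index_eq_two h).eq_bot_or_eq_top.resolve_left fun hbot => by
      rw [hbot, Subgroup.card_bot] at d2
      omega

/-! ### The involution -/

/-- If all fibres of a map have two points, let `p` exchange the two points of each fibre. The last
clause says that the fibre of `x` is `{x, p x}`. -/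
theorem exists_involution {X Γ : Type*} [Fintype X] [DecidableEq Γ] (φ : X → Γ)
    (hφ : ∀ c, (Finset.univ.filter fun x => φ x = c).card = 2) :
    ∃ p : Equiv.Perm X, p * p = 1 ∧ (∀ x, p x ≠ x) ∧ (∀ x, φ (p x) = φ x) ∧
      ∀ x y, φ y = φ x → y = x ∨ y = p x := by
  classical
  have h : ∀ x, ∃ y, y ≠ x ∧ φ y = φ x ∧ ∀ z, φ z = φ x → z = x ∨ z = y := by
    intro x
    obtain ⟨u, v, huv, hs⟩ := Finset.card_eq_two.1 (hφ (φ x))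
    have hmem : ∀ z, φ z = φ x ↔ z = u ∨ z = v := fun z => by
      simpa using Finset.ext_iff.1 hs z
    rcases (hmem x).1 rfl with rfl | rfl
    · exact ⟨v, huv.symm, (hmem v).2 (Or.inr rfl), fun z hz => (hmem z).1 hz⟩
    · exact ⟨u, huv, (hmem u).2 (Or.inl rfl), fun z hz => ((hmem z).1 hz).symm⟩
  choose q hq1 hq2 hq3 using h
  have hinv : Function.Involutive q := by
    intro x
    rcases hq3 (q x) x (hq2 x).symm with h | h
    · exact absurd h.symm (hq1 x)
    · exact h.symm
  exact ⟨hinv.toPerm, Equiv.ext hinv, hq1, hq2, hq3⟩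

theorem statement11 {X : Type*} [Fintype X] [DecidableEq X]
    (hcard : Fintype.card X = 120)
    (g1 g2 g3 g4 : Equiv.Perm X)
    (h1 : g1.cycleType = Multiset.replicate 60 2)
    (h2 : g2.cycleType = Multiset.replicate 40 3)
    (h3 : g3.cycleType = Multiset.replicate 24 5)
    (h4 : g4.cycleType = {2})
    (h5 : (g1 * g2 * g3 * g4).cycleType = {2})
    (htrans : ∀ x y : X, ∃ g ∈ Subgroup.closure ({g1, g2, g3, g4} : Set (Equiv.Perm X)),
      g x = y) :
    ∃ p : Equiv.Perm X, p * p = 1 ∧ (∀ x, p x ≠ x) ∧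
      p * g1 = g1 * p ∧ p * g2 = g2 * p ∧ p * g3 = g3 * p ∧ p * g4 = g4 * p ∧
      (∀ x, g4 x = x ∨ g4 x = p x) ∧
      (∀ x, (g1 * g2 * g3) x = x ∨ (g1 * g2 * g3) x = p x) := by
  have hpow : ∀ (g : Equiv.Perm X) (n r : ℕ), g.cycleType = Multiset.replicate n r →
      g ^ r = 1 := by
    intro g n r h
    rw [← orderOf_dvd_iff_pow_eq_one, ← Equiv.Perm.lcm_cycleType, h, Multiset.lcm_dvd]
    intro b hb
    rw [Multiset.eq_of_mem_replicate hb]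
  have hirr : Irred (fun i => (![g1, g2, g3, g4] i : X → X)) := by
    rintro T ⟨t, ht⟩ hcl x
    obtain ⟨g, hg, rfl⟩ := htrans t x
    refine smul_mem_of_closure (S := {g1, g2, g3, g4}) ?_ hg ht
    rintro _ (rfl | rfl | rfl | rfl)
    · exact hcl 0
    · exact hcl 1
    · exact hcl 2
    · exact hcl 3
  obtain ⟨γ₁, γ₂, γ₃, e1, e2, e3, e, hgen⟩ := exists_generators
  obtain ⟨φ, hφ⟩ := exists_lift hcard g1 g2 g3 g4 (hpow _ _ _ h1) (hpow _ _ _ h2)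
    (hpow _ _ _ h3) (Equiv.Perm.isSwap_iff_cycleType.2 h4)
    (Equiv.Perm.isSwap_iff_cycleType.2 h5) hirr γ₁ γ₂ γ₃ e1 e2 e3 e
  have f1 : ∀ x, φ (g1 x) = γ₁ * φ x := hφ 0
  have f2 : ∀ x, φ (g2 x) = γ₂ * φ x := hφ 1
  have f3 : ∀ x, φ (g3 x) = γ₃ * φ x := hφ 2
  have f4 : ∀ x, φ (g4 x) = φ x := fun x => (hφ 3 x).trans (one_mul _)
  have hirrΓ : Irred (fun i δ => ![γ₁, γ₂, γ₃, 1] i * δ) := by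
    rintro T ⟨t, ht⟩ hcl δ
    have hmem : δ * t⁻¹ ∈ Subgroup.closure {γ₁, γ₂, γ₃} := hgen ▸ Subgroup.mem_top _
    have := smul_mem_of_closure (T := T) (by
      rintro _ (rfl | rfl | rfl)
      · exact hcl 0
      · exact hcl 1
      · exact hcl 2) hmem ht
    simpa using this
  obtain ⟨d, hd⟩ := fiber_card_const φ (fun i => (![g1, g2, g3, g4] i : X → X))
    (fun i => Equiv.injective _) _ hφ hirrΓ
  have hd2 : d = 2 := by
    have := card_eq_mul_of_fiber φ hd
    rw [hcard, ← Nat.card_eq_fintype_card, nat_card_alternatingGroup] at this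
    simp [Nat.factorial] at this
    omega
  subst hd2
  obtain ⟨p, hp1, hp2, hφp, hp3⟩ := exists_involution φ hd
  have hcomm : ∀ (g : Equiv.Perm X) (δ : alternatingGroup (Fin 5)),
      (∀ x, φ (g x) = δ * φ x) → p * g = g * p := by
    intro g δ hg
    ext1 x
    have h := hp3 (g x) (g (p x)) (by rw [hg, hg, hφp])
    rcases h with h | h
    · exact absurd (g.injective h) (hp2 x)
    · exact h.symm
  refine ⟨p, hp1, hp2, hcomm _ _ f1, hcomm _ _ f2, hcomm _ _ f3,
    hcomm g4 1 (fun x => by rw [f4, one_mul]), fun x => hp3 x _ (f4 x), fun x => hp3 x _ ?_⟩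
  rw [Equiv.Perm.mul_apply, Equiv.Perm.mul_apply, f1, f2, f3, ← mul_assoc, ← mul_assoc, e, one_mul]
end

section
/- Let X be a finite set, h a permutation of X, and x1 ≠ x2 elements of X lying in the same orbit of the cyclic group ⟨h⟩. Let a and b be the least positive integers with h^a(x1) = x2 and h^b(x2) = x1, and let g be the transposition swapping x1 and x2. Then the ⟨g·h⟩-orbit of x1 has exactly a elements, the ⟨g·h⟩-orbit of x2 has exactly b elements, these two orbits are disjoint, and their union is the ⟨h⟩-orbit of x1; moreover, every ⟨h⟩-orbit containing neither x1 nor x2 is also a ⟨g·h⟩-orbit. -/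
/-!
Write `s = swap x1 x2 * h`. The `h`-cycle through `x1` and `x2` splits into the arc
`x1, h x1, …, h ^ (a - 1) x1` and the arc `x2, h x2, …, h ^ (b - 1) x2`. By minimality of `a`, the
first arc meets `{x1, x2}` only at its start, so `s` acts on it like `h` until `h` would step onto
`x2`, where the transposition returns the point to `x1` instead. Hence the arc is the `s`-orbit of
`x1` and has `a` elements (`orbit_swap_mul`, `ncard_orbit_swap_mul`); the other arc is symmetric.
The arcs are disjoint, since cancelling powers of `h` in `h ^ k x1 = h ^ j x2` contradicts
minimality of `a` or `b`, and their union is stable under `h`. Off the orbits of `x1` and `x2`, the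
permutations `s` and `h` agree.
-/

open Equiv in
/-- In a finite set the orbit is already swept out by the natural powers. -/
theorem mem_orbit_zpowers_iff_pow {X : Type*} [Finite X] (f : Perm X) (x y : X) :
    y ∈ MulAction.orbit (Subgroup.zpowers f) x ↔ ∃ k : ℕ, (f ^ k) x = y := by
  constructor
  · rintro ⟨⟨_, n, rfl⟩, rfl⟩
    obtain ⟨k, -, hk⟩ := Perm.SameCycle.exists_pow_eq' (f := f) (x := x) (y := (f ^ n) x) ⟨n, rfl⟩
    exact ⟨k, hk⟩
  · rintro ⟨k, rfl⟩
    exact ⟨⟨f ^ k, Subgroup.npow_mem_zpowers f k⟩, rfl⟩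

section Arc

variable {X : Type*} {h : Equiv.Perm X} {x y : X} {a : ℕ}

/-- If `h ^ k x = x` with `0 < k < a`, then `h ^ (a - k) x = y` already, against minimality. -/
theorem pow_ne_start_of_lt (hax : (h ^ a) x = y)
    (hamin : ∀ k : ℕ, 0 < k → (h ^ k) x = y → a ≤ k) {k : ℕ} (hk : 0 < k) (hka : k < a) :
    (h ^ k) x ≠ x := by
  intro hx
  have h1 : (h ^ (a - k)) x = y := by
    rw [← hax]
    conv_rhs => rw [show a = (a - k) + k by omega, pow_add, Equiv.Perm.mul_apply, hx]
  have := hamin (a - k) (by omega) h1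
  omega

variable [DecidableEq X]

theorem swap_mul_pow_of_lt (hax : (h ^ a) x = y)
    (hamin : ∀ k : ℕ, 0 < k → (h ^ k) x = y → a ≤ k) {k : ℕ} (hka : k < a) :
    ((Equiv.swap x y * h) ^ k) x = (h ^ k) x := by
  induction k with
  | zero => rfl
  | succ k ih =>
    have h2 : (h ^ (k + 1)) x ≠ y := fun e => by
      have := hamin _ k.succ_pos e
      omega
    have h3 := pow_ne_start_of_lt hax hamin k.succ_pos hka
    rw [pow_succ', Equiv.Perm.mul_apply, ih (by omega), Equiv.Perm.mul_apply,
      ← Equiv.Perm.mul_apply h, ← pow_succ', Equiv.swap_apply_of_ne_of_ne h3 h2]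

theorem swap_mul_pow_self (ha : 0 < a) (hax : (h ^ a) x = y)
    (hamin : ∀ k : ℕ, 0 < k → (h ^ k) x = y → a ≤ k) :
    ((Equiv.swap x y * h) ^ a) x = x := by
  obtain ⟨c, rfl⟩ : ∃ c, a = c + 1 := ⟨a - 1, by omega⟩
  rw [pow_succ', Equiv.Perm.mul_apply, swap_mul_pow_of_lt hax hamin (by omega),
    Equiv.Perm.mul_apply, ← Equiv.Perm.mul_apply h, ← pow_succ', hax, Equiv.swap_apply_right]

theorem minimalPeriod_swap_mul (ha : 0 < a) (hax : (h ^ a) x = y)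
    (hamin : ∀ k : ℕ, 0 < k → (h ^ k) x = y → a ≤ k) :
    Function.minimalPeriod (Equiv.swap x y * h) x = a := by
  have hp : Function.IsPeriodicPt (Equiv.swap x y * h) a x := by
    rw [Function.IsPeriodicPt, Function.IsFixedPt, Equiv.Perm.iterate_eq_pow]
    exact swap_mul_pow_self ha hax hamin
  refine (hp.minimalPeriod_le ha).eq_of_not_lt fun hlt => ?_
  have hm := Function.isPeriodicPt_minimalPeriod (Equiv.swap x y * h) x
  rw [Function.IsPeriodicPt, Function.IsFixedPt, Equiv.Perm.iterate_eq_pow,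
    swap_mul_pow_of_lt hax hamin hlt] at hm
  exact pow_ne_start_of_lt hax hamin (hp.minimalPeriod_pos ha) hlt hm

variable [Finite X]

theorem ncard_orbit_swap_mul (ha : 0 < a) (hax : (h ^ a) x = y)
    (hamin : ∀ k : ℕ, 0 < k → (h ^ k) x = y → a ≤ k) :
    (MulAction.orbit (Subgroup.zpowers (Equiv.swap x y * h)) x).ncard = a := by
  have := Fintype.ofFinite (MulAction.orbit (Subgroup.zpowers (Equiv.swap x y * h)) x)
  rw [Set.ncard_eq_toFinset_card', Set.toFinset_card, ← MulAction.minimalPeriod_eq_card]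
  exact minimalPeriod_swap_mul ha hax hamin

/-- The orbit of `x` under `swap x y * h` is the `h`-arc from `x` up to, but excluding, `y`. -/
theorem orbit_swap_mul (ha : 0 < a) (hax : (h ^ a) x = y)
    (hamin : ∀ k : ℕ, 0 < k → (h ^ k) x = y → a ≤ k) (z : X) :
    z ∈ MulAction.orbit (Subgroup.zpowers (Equiv.swap x y * h)) x ↔
      ∃ k < a, (h ^ k) x = z := by
  rw [mem_orbit_zpowers_iff_pow]
  constructor
  · rintro ⟨k, rfl⟩
    refine ⟨k % a, Nat.mod_lt _ ha, ?_⟩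
    rw [← swap_mul_pow_of_lt hax hamin (Nat.mod_lt _ ha)]
    have := Function.iterate_mod_minimalPeriod_eq (f := Equiv.swap x y * h) (x := x) (n := k)
    rwa [minimalPeriod_swap_mul ha hax hamin, Equiv.Perm.iterate_eq_pow,
      Equiv.Perm.iterate_eq_pow] at this
  · rintro ⟨k, hk, rfl⟩
    exact ⟨k, swap_mul_pow_of_lt hax hamin hk⟩

end Arc

/-- Two arcs cannot meet with the second having travelled at least as far: going back `k` steps
would bring the second from `y` to `x` in fewer than `b` steps. -/
theorem pow_ne_pow_of_le {X : Type*} {h : Equiv.Perm X} {x y : X} {b : ℕ} (hne : x ≠ y)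
    (hbmin : ∀ k : ℕ, 0 < k → (h ^ k) y = x → b ≤ k) {k j : ℕ} (hj : j < b) (hkj : k ≤ j) :
    (h ^ k) x ≠ (h ^ j) y := by
  intro e
  have e' : (h ^ (j - k)) y = x := by
    apply (h ^ k).injective
    rw [e, ← Equiv.Perm.mul_apply, ← pow_add, Nat.add_sub_cancel' hkj]
  rcases Nat.eq_zero_or_pos (j - k) with h0 | h0
  · rw [h0] at e'
    exact hne e'.symm
  · have := hbmin _ h0 e'
    omega


theorem statement14 {X : Type*} [Fintype X] [DecidableEq X]
    (h : Equiv.Perm X) (x1 x2 : X) (hne : x1 ≠ x2)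
    (horb : x2 ∈ MulAction.orbit (Subgroup.zpowers h) x1)
    (a b : ℕ) (ha : 0 < a) (hb : 0 < b)
    (hax : (h ^ a) x1 = x2) (hamin : ∀ k : ℕ, 0 < k → (h ^ k) x1 = x2 → a ≤ k)
    (hbx : (h ^ b) x2 = x1) (hbmin : ∀ k : ℕ, 0 < k → (h ^ k) x2 = x1 → b ≤ k) :
    (MulAction.orbit (Subgroup.zpowers (Equiv.swap x1 x2 * h)) x1).ncard = a ∧
    (MulAction.orbit (Subgroup.zpowers (Equiv.swap x1 x2 * h)) x2).ncard = b ∧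
    Disjoint (MulAction.orbit (Subgroup.zpowers (Equiv.swap x1 x2 * h)) x1)
      (MulAction.orbit (Subgroup.zpowers (Equiv.swap x1 x2 * h)) x2) ∧
    MulAction.orbit (Subgroup.zpowers (Equiv.swap x1 x2 * h)) x1 ∪
        MulAction.orbit (Subgroup.zpowers (Equiv.swap x1 x2 * h)) x2 =
      MulAction.orbit (Subgroup.zpowers h) x1 ∧
    ∀ x : X, x1 ∉ MulAction.orbit (Subgroup.zpowers h) x →
      x2 ∉ MulAction.orbit (Subgroup.zpowers h) x →
      MulAction.orbit (Subgroup.zpowers (Equiv.swap x1 x2 * h)) x =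
        MulAction.orbit (Subgroup.zpowers h) x := by
  have hO1 := orbit_swap_mul ha hax hamin
  have hO2 := orbit_swap_mul hb hbx hbmin
  have hc2 := ncard_orbit_swap_mul hb hbx hbmin
  rw [Equiv.swap_comm x2 x1] at hO2 hc2
  refine ⟨ncard_orbit_swap_mul ha hax hamin, hc2, ?_, ?_, ?_⟩
  · rw [Set.disjoint_left]
    intro z hz1 hz2
    obtain ⟨k, hk, e1⟩ := (hO1 z).1 hz1
    obtain ⟨j, hj, e2⟩ := (hO2 z).1 hz2
    rcases le_total k j with hkj | hkj
    · exact pow_ne_pow_of_le hne hbmin hj hkj (e1.trans e2.symm)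
    · exact pow_ne_pow_of_le hne.symm hamin hk hkj (e2.trans e1.symm)
  · ext z
    rw [Set.mem_union, hO1, hO2, mem_orbit_zpowers_iff_pow]
    constructor
    · rintro (⟨k, -, rfl⟩ | ⟨k, -, rfl⟩)
      · exact ⟨k, rfl⟩
      · exact ⟨k + a, by rw [pow_add, Equiv.Perm.mul_apply, hax]⟩
    · rintro ⟨m, rfl⟩
      -- Following `h` from `x1`, the end of each arc leads to the start of the other.
      induction m with
      | zero => exact Or.inl ⟨0, ha, rfl⟩
      | succ m ih =>
        rw [pow_succ', Equiv.Perm.mul_apply]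
        rcases ih with ⟨k, hk, e⟩ | ⟨k, hk, e⟩
        · rw [← e, ← Equiv.Perm.mul_apply, ← pow_succ']
          rcases Nat.lt_or_ge (k + 1) a with hlt | hge
          · exact Or.inl ⟨k + 1, hlt, rfl⟩
          · obtain rfl : a = k + 1 := by omega
            exact Or.inr ⟨0, hb, hax.symm⟩
        · rw [← e, ← Equiv.Perm.mul_apply, ← pow_succ']
          rcases Nat.lt_or_ge (k + 1) b with hlt | hge
          · exact Or.inr ⟨k + 1, hlt, rfl⟩
          · obtain rfl : b = k + 1 := by omega
            exact Or.inl ⟨0, ha, hbx.symm⟩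
  · intro x h1 h2
    rw [mem_orbit_zpowers_iff_pow] at h1 h2
    have key : ∀ k : ℕ, ((Equiv.swap x1 x2 * h) ^ k) x = (h ^ k) x := by
      intro k
      induction k with
      | zero => rfl
      | succ k ih =>
        rw [pow_succ', Equiv.Perm.mul_apply, ih, Equiv.Perm.mul_apply,
          ← Equiv.Perm.mul_apply h, ← pow_succ',
          Equiv.swap_apply_of_ne_of_ne (fun e => h1 ⟨_, e⟩) (fun e => h2 ⟨_, e⟩)]
    ext z
    simp only [mem_orbit_zpowers_iff_pow, key]
end
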